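/- arXiv:1506.05746 — 3 statements merged into one kernel-verified Lean document; each statement's English description precedes it below -/
import Mathlib

section
/- Let θ be irrational with finite irrationality measure μ = μ(θ). If α > 1 − 1/(2μ−2), then the series ∑_{n=1}^∞ sin^n(π n θ)/n^α converges absolutely. -/
open Real Filter

/-- With `x` the signed distance from `t` to the nearest half-integer, `|sin (π t)| = cos (π x)`
decays at least like a rational function of `x` when raised to a power. -/
lemma abs_sin_pi_mul_pow_le (t : ℝ) (N : ℕ) :
    |sin (π * t)| ^ N ≤ 1 / (1 + N * (2 * (t - 1 / 2 - round (t - 1 / 2)) ^ 2)) := by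
  set x := t - 1 / 2 - round (t - 1 / 2) with hx
  have hx2 : |x| ≤ 1 / 2 := abs_sub_round _
  have hsin : |sin (π * t)| = |cos (π * x)| := by
    have h : π * t = (π * x + round (t - 1 / 2) * π) + π / 2 := by rw [hx]; ring
    rw [h, sin_add_pi_div_two, cos_add_int_mul_pi, abs_mul, abs_zpow]
    simp
  have habs : |π * x| ≤ π / 2 := by
    rw [abs_mul, abs_of_pos pi_pos]
    nlinarith [pi_pos]
  have hcos0 : 0 ≤ cos (π * x) := cos_nonneg_of_mem_Icc (abs_le.mp habs)
  have hcos : cos (π * x) ≤ 1 - 2 * x ^ 2 := by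
    have h := cos_le_one_sub_mul_cos_sq (x := π * x) (by linarith [pi_pos])
    have h' : 2 / π ^ 2 * (π * x) ^ 2 = 2 * x ^ 2 := by field_simp
    linarith
  rw [hsin, abs_of_nonneg hcos0, le_div_iff₀ (by positivity)]
  have hB : 1 + N * (2 * x ^ 2) ≤ (1 + 2 * x ^ 2) ^ N :=
    one_add_mul_le_pow (by nlinarith [sq_nonneg x]) N
  calc cos (π * x) ^ N * (1 + N * (2 * x ^ 2))
      ≤ cos (π * x) ^ N * (1 + 2 * x ^ 2) ^ N := by gcongr
    _ = (cos (π * x) * (1 + 2 * x ^ 2)) ^ N := (mul_pow ..).symm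
    _ ≤ 1 := pow_le_one₀ (by positivity) (by nlinarith [sq_nonneg x, sq_nonneg (x ^ 2)])

lemma summable_one_div_one_add_int_sq : Summable fun j : ℤ => 1 / (1 + (j : ℝ) ^ 2) := by
  have h1 : Summable fun j : ℤ => 1 / (j : ℝ) ^ 2 :=
    Real.summable_one_div_int_pow.mpr one_lt_two
  have h2 : Summable fun j : ℤ => if j = 0 then (1 : ℝ) else 0 := (hasSum_ite_eq 0 1).summable
  refine Summable.of_nonneg_of_le (fun j => by positivity) (fun j => ?_) (h1.add h2)
  by_cases hj : j = 0
  · simp [hj]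
  · have : (0 : ℝ) < (j : ℝ) ^ 2 := by positivity
    simp only [hj, if_false, add_zero]
    gcongr
    linarith

/-- If the points `n θ` are `c / √N`-separated modulo one, the `N`-th powers of the sines have
bounded sum. -/
lemma exists_sum_abs_sin_pow_le {c : ℝ} (hc : 0 < c) :
    ∃ C : ℝ, ∀ (θ : ℝ) (I : Finset ℕ) (N : ℕ), 0 < N →
      (∀ m ∈ I, ∀ n ∈ I, m ≠ n → ∀ j : ℤ, c / √N ≤ |((m : ℝ) - n) * θ - j|) →
      ∑ n ∈ I, |sin (π * (n * θ))| ^ N ≤ C := by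
  set K : ℝ := 3 + 1 / c ^ 2 with hK
  refine ⟨∑' j : ℤ, K * (1 / (1 + (j : ℝ) ^ 2)), fun θ I N hN hsep => ?_⟩
  have hN' : (0 : ℝ) < N := by exact_mod_cast hN
  set η := c / √N with hη
  have hη0 : 0 < η := by positivity
  have hNη : N * η ^ 2 = c ^ 2 := by
    rw [hη, div_pow, Real.sq_sqrt hN'.le]; field_simp
  set x : ℕ → ℝ := fun n => n * θ - 1 / 2 - round (n * θ - 1 / 2) with hx
  set e : ℕ → ℤ := fun n => ⌊x n / η⌋ with he
  have hinj : Set.InjOn e I := by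
    intro m hm n hn hmn
    by_contra hne
    have h1 : |x m / η - x n / η| < 1 := Int.abs_sub_lt_one_of_floor_eq_floor hmn
    rw [← sub_div, abs_div, abs_of_pos hη0, div_lt_one hη0] at h1
    have h2 := hsep m hm n hn hne (round (m * θ - 1 / 2) - round (n * θ - 1 / 2))
    have h3 : ((m : ℝ) - n) * θ - ((round (m * θ - 1 / 2) - round (n * θ - 1 / 2) : ℤ) : ℝ)
        = x m - x n := by simp only [hx]; push_cast; ring
    rw [h3] at h2
    linarith
  have hsum := summable_one_div_one_add_int_sq.mul_left K
  calc ∑ n ∈ I, |sin (π * (n * θ))| ^ N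
      ≤ ∑ n ∈ I, K * (1 / (1 + (e n : ℝ) ^ 2)) := by
        refine Finset.sum_le_sum fun n _ => (abs_sin_pi_mul_pow_le _ N).trans ?_
        change 1 / (1 + N * (2 * x n ^ 2)) ≤ _
        obtain ⟨y, hy⟩ : ∃ y, y = x n / η := ⟨_, rfl⟩
        have hxy : x n = y * η := by rw [hy]; field_simp
        have hfl : e n ≤ y := by rw [hy]; exact Int.floor_le _
        have hfl' : y < e n + 1 := by rw [hy]; exact Int.lt_floor_add_one _
        have hsq : (e n : ℝ) ^ 2 ≤ 2 * y ^ 2 + 2 := by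
          nlinarith [sq_nonneg (y + (y - e n))]
        have hNx : N * (2 * x n ^ 2) = 2 * c ^ 2 * y ^ 2 := by rw [hxy, ← hNη]; ring
        rw [hNx, mul_one_div, div_le_div_iff₀ (by positivity) (by positivity)]
        have hcancel : 1 / c ^ 2 * (2 * c ^ 2 * y ^ 2) = 2 * y ^ 2 := by field_simp
        have h1 : 0 ≤ 1 / c ^ 2 := by positivity
        have h2 : 0 ≤ c ^ 2 * y ^ 2 := by positivity
        rw [hK]
        linarith
    _ = ∑ j ∈ I.image e, K * (1 / (1 + (j : ℝ) ^ 2)) :=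
        (Finset.sum_image (f := fun j : ℤ => K * (1 / (1 + (j : ℝ) ^ 2))) hinj).symm
    _ ≤ _ := hsum.sum_le_tsum _ fun j _ => by positivity

/-- The exponent in a lower bound for `|θ - a / b|` is at least two, by Dirichlet's theorem. -/
lemma two_le_of_div_rpow_lt_abs_sub {θ μ : ℝ}
    (hμ : ∀ δ' : ℝ, 0 < δ' → ∃ c : ℝ, 0 < c ∧ ∀ (a : ℤ) (b : ℕ), 1 ≤ b →
      c / (b : ℝ) ^ (μ + δ') < |θ - (a : ℝ) / b|) : 2 ≤ μ := by
  by_contra! hlt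
  set s := max 1 ((μ + 2) / 2) with hs
  have hs1 : 1 ≤ s := le_max_left ..
  have hs2 : s < 2 := max_lt one_lt_two (by linarith)
  have hsμ : μ < s := lt_of_lt_of_le (by linarith) (le_max_right ..)
  obtain ⟨c, hc, h⟩ := hμ (s - μ) (by linarith)
  rw [add_sub_cancel] at h
  have key : ∀ n : ℕ, 0 < n → c ≤ (n : ℝ) ^ (-(2 - s)) := by
    intro n hn
    obtain ⟨j, k, hk, hkn, hjk⟩ := Real.exists_int_int_abs_mul_sub_le θ hn
    lift k to ℕ using hk.le
    have hk1 : 1 ≤ k := by exact_mod_cast hk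
    have hkR : (0 : ℝ) < k := by exact_mod_cast hk
    have hnR : (0 : ℝ) < n := by exact_mod_cast hn
    have hkn' : (k : ℝ) ≤ n := by exact_mod_cast hkn
    have h1 := h j k hk1
    have h2 : θ - (j : ℝ) / k = (k * θ - j) / k := by field_simp
    rw [h2, abs_div, abs_of_pos hkR, div_lt_div_iff₀ (by positivity) hkR] at h1
    have h3 : (k : ℝ) ^ s = k ^ (s - 1) * k := by
      rw [← rpow_add_one hkR.ne']; ring_nf
    rw [h3, ← mul_assoc] at h1
    have h4 := lt_of_mul_lt_mul_right h1 hkR.le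
    have hjk' : |(k : ℝ) * θ - j| ≤ 1 / (n + 1) := by simpa using hjk
    calc c ≤ |(k : ℝ) * θ - j| * k ^ (s - 1) := h4.le
      _ ≤ 1 / n * n ^ (s - 1) := by
        gcongr
        · exact hjk'.trans (by gcongr; linarith)
      _ = (n : ℝ) ^ (-(2 - s)) := by
        rw [one_div, ← rpow_neg_one, ← rpow_add hnR]; ring_nf
  have hlim : Tendsto (fun n : ℕ => (n : ℝ) ^ (-(2 - s))) atTop (nhds 0) :=
    (tendsto_rpow_neg_atTop (by linarith)).comp tendsto_natCast_atTop_atTop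
  have := ge_of_tendsto hlim ((eventually_gt_atTop 0).mono key)
  linarith

lemma sum_Ico_add_mul_le {h : ℕ → ℝ} {C : ℝ} {N L : ℕ}
    (hC : ∀ M, ∑ n ∈ Finset.Ico M (M + L), h n ≤ C) (q : ℕ) :
    ∑ n ∈ Finset.Ico N (N + q * L), h n ≤ q * C := by
  induction q with
  | zero => simp
  | succ q ih =>
    rw [← Finset.sum_Ico_consecutive h (Nat.le_add_right N (q * L)) (by gcongr; omega)]
    have := hC (N + q * L)
    rw [show N + (q + 1) * L = N + q * L + L by ring]
    push_cast
    linarith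

/-- A lower bound for the distances of `k θ` to the integers, with exponent `s`, bounds the sum of
the powers of the sines over a dyadic block. -/
lemma exists_sum_Ico_abs_sin_pow_le {θ c s : ℝ} (hc : 0 < c) (hs : 1 ≤ s)
    (hθ : ∀ k : ℕ, 1 ≤ k → ∀ j : ℤ, c / (k : ℝ) ^ s ≤ |k * θ - j|) :
    ∃ C : ℝ, 0 ≤ C ∧ ∀ N : ℕ, 0 < N →
      ∑ n ∈ Finset.Ico N (2 * N), |sin (π * (n * θ))| ^ N ≤ C * (N : ℝ) ^ (1 - 1 / (2 * s)) := by
  have hs0 : 0 < s := by linarith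
  obtain ⟨C, hC⟩ := exists_sum_abs_sin_pow_le (c := c / 2 ^ s) (by positivity)
  have hC0 : 0 ≤ C := by simpa using hC θ ∅ 1 one_pos (by simp)
  refine ⟨2 * C, by positivity, fun N hN => ?_⟩
  have hN1 : (1 : ℝ) ≤ N := by exact_mod_cast hN
  have hN0 : (0 : ℝ) < N := by linarith
  set β := 1 / (2 * s) with hβ
  have hβ0 : 0 < β := by positivity
  have hβ1 : β ≤ 1 := by
    rw [hβ, div_le_one (by positivity)]; linarith
  have hNβ : 1 ≤ (N : ℝ) ^ β := one_le_rpow hN1 hβ0.le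
  set L := ⌈(N : ℝ) ^ β⌉₊ with hL
  have hL1 : (N : ℝ) ^ β ≤ L := Nat.le_ceil _
  have hL2 : (L : ℝ) ≤ 2 * (N : ℝ) ^ β := by
    have := Nat.ceil_lt_add_one (a := (N : ℝ) ^ β) (by positivity)
    linarith
  have hL0 : 0 < L := Nat.ceil_pos.mpr (by positivity)
  have hscale : c / 2 ^ s / √N = c / (2 * (N : ℝ) ^ β) ^ s := by
    rw [mul_rpow (by norm_num) (by positivity), ← rpow_mul hN0.le, sqrt_eq_rpow, div_div]
    congr 3
    rw [hβ]; field_simp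
  have hsep : ∀ M m n : ℕ, m ∈ Finset.Ico M (M + L) → n ∈ Finset.Ico M (M + L) → n < m →
      ∀ j : ℤ, c / 2 ^ s / √N ≤ |((m : ℝ) - n) * θ - j| := by
    intro M m n hm hn hnm j
    rw [Finset.mem_Ico] at hm hn
    have hk : 1 ≤ m - n := by omega
    have hkR : (0 : ℝ) < (m - n : ℕ) := by exact_mod_cast hk
    have hkL : ((m - n : ℕ) : ℝ) ≤ L := by exact_mod_cast (by omega : m - n ≤ L)
    have h := hθ (m - n) hk j
    rw [hscale]
    rw [← Nat.cast_sub hnm.le]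
    refine le_trans ?_ h
    gcongr
    exact hkL.trans hL2
  have hblock : ∀ M, ∑ n ∈ Finset.Ico M (M + L), |sin (π * (n * θ))| ^ N ≤ C := by
    intro M
    refine hC θ _ N hN fun m hm n hn hne j => ?_
    rcases lt_or_gt_of_ne hne with hlt | hlt
    · have h := hsep M n m hn hm hlt (-j)
      have e : ((n : ℝ) - m) * θ - ((-j : ℤ) : ℝ) = -(((m : ℝ) - n) * θ - j) := by
        push_cast; ring
      rwa [e, abs_neg] at h
    · exact hsep M m n hm hn hlt j
  have hcover : N ≤ (N / L + 1) * L := by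
    have := Nat.lt_div_mul_add (a := N) hL0
    rw [add_mul, one_mul]; omega
  have hq : ((N / L + 1 : ℕ) : ℝ) ≤ 2 * (N : ℝ) ^ (1 - β) := by
    have h1 : ((N / L : ℕ) : ℝ) ≤ N / L := Nat.cast_div_le
    have h2 : (N : ℝ) / L ≤ N / (N : ℝ) ^ β := by gcongr
    have h3 : (N : ℝ) / (N : ℝ) ^ β = (N : ℝ) ^ (1 - β) := by rw [rpow_sub hN0, rpow_one]
    have h4 : 1 ≤ (N : ℝ) ^ (1 - β) := one_le_rpow hN1 (by linarith)
    push_cast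
    linarith
  calc ∑ n ∈ Finset.Ico N (2 * N), |sin (π * (n * θ))| ^ N
      ≤ ∑ n ∈ Finset.Ico N (N + (N / L + 1) * L), |sin (π * (n * θ))| ^ N :=
        Finset.sum_le_sum_of_subset_of_nonneg
          (Finset.Ico_subset_Ico_right (by omega)) fun _ _ _ => by positivity
    _ ≤ (N / L + 1 : ℕ) * C := sum_Ico_add_mul_le hblock _
    _ ≤ 2 * (N : ℝ) ^ (1 - β) * C := by gcongr
    _ = 2 * C * (N : ℝ) ^ (1 - β) := by ring

/-- A nonnegative series whose dyadic blocks are dominated by a geometric series converges. -/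
lemma summable_of_sum_Ico_two_pow_le {g : ℕ → ℝ} {D r : ℝ} (hg : ∀ n, 0 ≤ g n) (hD : 0 ≤ D)
    (hr0 : 0 ≤ r) (hr1 : r < 1)
    (h : ∀ k : ℕ, ∑ n ∈ Finset.Ico (2 ^ k) (2 * 2 ^ k), g n ≤ D * r ^ k) : Summable g := by
  have hgeo : Summable fun k : ℕ => D * r ^ k :=
    (summable_geometric_of_lt_one hr0 hr1).mul_left D
  have hdyadic : ∀ K : ℕ,
      ∑ n ∈ Finset.range (2 ^ K), g n ≤ g 0 + ∑ k ∈ Finset.range K, D * r ^ k := by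
    intro K
    induction K with
    | zero => simp
    | succ K ih =>
      have hle : 2 ^ K ≤ 2 * 2 ^ K := by omega
      rw [pow_succ', ← Finset.sum_range_add_sum_Ico g hle, Finset.sum_range_succ]
      linarith [h K]
  refine summable_of_sum_range_le (c := g 0 + ∑' k : ℕ, D * r ^ k) hg fun n => ?_
  calc ∑ i ∈ Finset.range n, g i ≤ ∑ i ∈ Finset.range (2 ^ n), g i :=
        Finset.sum_le_sum_of_subset_of_nonneg
          (Finset.range_subset_range.mpr Nat.lt_two_pow_self.le) fun i _ _ => hg i
    _ ≤ g 0 + ∑ k ∈ Finset.range n, D * r ^ k := hdyadic n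
    _ ≤ _ := by
        gcongr
        exact hgeo.sum_le_tsum _ fun k _ => by positivity

lemma summable_abs_sin_pow_div_rpow {θ c s α : ℝ} (hc : 0 < c) (hs : 1 ≤ s)
    (hθ : ∀ k : ℕ, 1 ≤ k → ∀ j : ℤ, c / (k : ℝ) ^ s ≤ |k * θ - j|)
    (hα : 1 - 1 / (2 * s) < α) :
    Summable fun n : ℕ => |sin (π * (n * θ))| ^ n / (n : ℝ) ^ α := by
  obtain ⟨C, hC0, hC⟩ := exists_sum_Ico_abs_sin_pow_le hc hs hθ
  have hα0 : 0 ≤ α := by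
    have : 1 / (2 * s) ≤ 1 := by
      rw [div_le_one (by positivity)]; linarith
    linarith
  refine summable_of_sum_Ico_two_pow_le (D := C) (r := 2 ^ (1 - 1 / (2 * s) - α))
    (fun n => by positivity) hC0 (by positivity)
    (rpow_lt_one_of_one_lt_of_neg one_lt_two (by linarith)) fun k => ?_
  have hN : 0 < 2 ^ k := by positivity
  have h := hC (2 ^ k) hN
  set N := 2 ^ k with hNk
  have hN0 : (0 : ℝ) < N := by exact_mod_cast hN
  have hr : ((2 : ℝ) ^ (1 - 1 / (2 * s) - α)) ^ k = (N : ℝ) ^ (1 - 1 / (2 * s)) / (N : ℝ) ^ α := by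
    rw [← rpow_sub hN0, hNk, Nat.cast_pow, ← rpow_natCast, ← rpow_natCast, ← rpow_mul two_pos.le,
      ← rpow_mul (by norm_num), mul_comm, Nat.cast_ofNat]
  calc ∑ n ∈ Finset.Ico N (2 * N), |sin (π * (n * θ))| ^ n / (n : ℝ) ^ α
      ≤ ∑ n ∈ Finset.Ico N (2 * N), |sin (π * (n * θ))| ^ N / (N : ℝ) ^ α := by
        refine Finset.sum_le_sum fun n hn => ?_
        have hn' : N ≤ n := (Finset.mem_Ico.mp hn).1
        have hpow := pow_le_pow_of_le_one (abs_nonneg _) (abs_sin_le_one (π * (n * θ))) hn'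
        gcongr
    _ = (∑ n ∈ Finset.Ico N (2 * N), |sin (π * (n * θ))| ^ N) / (N : ℝ) ^ α :=
        (Finset.sum_div ..).symm
    _ ≤ C * (N : ℝ) ^ (1 - 1 / (2 * s)) / (N : ℝ) ^ α := by gcongr
    _ = _ := by rw [hr, mul_div_assoc]

/-- If θ is irrational with finite irrationality measure μ and α > 1 − 1/(2μ−2),
then ∑ sinⁿ(π n θ)/n^α converges absolutely. -/
theorem stmt11 (θ μ α : ℝ) (hirr : Irrational θ)
    (hμ : ∀ δ' : ℝ, 0 < δ' → ∃ c : ℝ, 0 < c ∧ ∀ (a : ℤ) (b : ℕ), 1 ≤ b →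
      c / (b : ℝ) ^ (μ + δ') < |θ - (a : ℝ) / b|)
    (hα : 1 - 1 / (2 * μ - 2) < α) :
    Summable (fun n : ℕ =>
      |Real.sin (Real.pi * ((n : ℝ) + 1) * θ) ^ (n + 1) / ((n : ℝ) + 1) ^ α|) := by
  have hμ2 : 2 ≤ μ := two_le_of_div_rpow_lt_abs_sub hμ
  obtain ⟨δ, hδα, hδ⟩ : ∃ δ : ℝ, 1 - 1 / (2 * (μ - 1 + δ)) < α ∧ 0 < δ := by
    have hcont : ContinuousAt (fun δ : ℝ => 1 - 1 / (2 * (μ - 1 + δ))) 0 := by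
      have : 2 * (μ - 1 + 0) ≠ 0 := by linarith
      fun_prop (disch := assumption)
    have hlt : 1 - 1 / (2 * (μ - 1 + 0)) < α := by
      rwa [show 2 * (μ - 1 + 0) = 2 * μ - 2 by ring]
    have hev := (hcont.eventually_lt_const hlt).filter_mono
      (nhdsWithin_le_nhds (s := Set.Ioi (0 : ℝ)))
    exact (hev.and self_mem_nhdsWithin).exists
  obtain ⟨c, hc, h⟩ := hμ δ hδ
  have hθ : ∀ k : ℕ, 1 ≤ k → ∀ j : ℤ, c / (k : ℝ) ^ (μ - 1 + δ) ≤ |k * θ - j| := by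
    intro k hk j
    have hk0 : (0 : ℝ) < k := by exact_mod_cast hk
    have h1 : (k : ℝ) * θ - j = k * (θ - j / k) := by field_simp
    have h2 : (k : ℝ) ^ (μ + δ) = k ^ (μ - 1 + δ) * k := by
      rw [← rpow_add_one hk0.ne']; ring_nf
    have h3 := h j k hk
    rw [h1, abs_mul, abs_of_pos hk0]
    calc c / (k : ℝ) ^ (μ - 1 + δ) = k * (c / (k : ℝ) ^ (μ + δ)) := by rw [h2]; field_simp
      _ ≤ _ := by gcongr
  have hsum := (summable_nat_add_iff 1).mpr
    (summable_abs_sin_pow_div_rpow hc (by linarith) hθ hδα)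
  refine hsum.congr fun n => ?_
  rw [abs_div, abs_pow, abs_of_nonneg (by positivity : 0 ≤ ((n : ℝ) + 1) ^ α)]
  push_cast
  rw [mul_assoc]
end

section
/- Let θ be an irrational algebraic number and α > 1/2. Then both series ∑_{n=1}^∞ sin^n(π n θ)/n^α and ∑_{n=1}^∞ cos^n(π n θ)/n^α converge absolutely. -/
open Real Filter

namespace MvPolynomial

section Hasse

variable {σ R S : Type*} [CommRing R] [CommRing S]

/-- The algebra homomorphism `P(X) ↦ P(X + Y)`, the outer variables being `Y`. -/
noncomputable def taylorHom (σ R : Type*) [CommRing R] :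
    MvPolynomial σ R →ₐ[R] MvPolynomial σ (MvPolynomial σ R) :=
  aeval fun i => C (X i) + X i

/-- The Hasse derivative of multi-order `I`: the coefficient of `Y ^ I` in `P(X + Y)`. -/
noncomputable def hasse (I : σ →₀ ℕ) : MvPolynomial σ R →ₗ[R] MvPolynomial σ R :=
  ((lcoeff (MvPolynomial σ R) I).restrictScalars R) ∘ₗ (taylorHom σ R).toLinearMap

/-- The translate `P(X + β)`. -/
noncomputable def shift [Algebra R S] (β : σ → S) : MvPolynomial σ R →ₐ[R] MvPolynomial σ S :=
  aeval fun i => X i + C (β i)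

theorem hasse_apply (I : σ →₀ ℕ) (P : MvPolynomial σ R) :
    hasse I P = coeff I (taylorHom σ R P) := rfl

@[simp] theorem taylorHom_X (i : σ) : taylorHom σ R (X i) = C (X i) + X i := by
  simp [taylorHom]

@[simp] theorem taylorHom_C (a : R) : taylorHom σ R (C a) = C (C a) := by
  simp [taylorHom, MvPolynomial.algebraMap_apply]

@[simp] theorem shift_X [Algebra R S] (β : σ → S) (i : σ) :
    shift β (X i : MvPolynomial σ R) = X i + C (β i) := by
  simp [shift]

@[simp] theorem shift_C [Algebra R S] (β : σ → S) (a : R) :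
    shift β (C a : MvPolynomial σ R) = C (algebraMap R S a) := by
  simp [shift, MvPolynomial.algebraMap_apply]

theorem shift_eq_map_taylorHom [Algebra R S] (β : σ → S) (P : MvPolynomial σ R) :
    shift β P = map (aeval β : MvPolynomial σ R →ₐ[R] S).toRingHom (taylorHom σ R P) := by
  induction P using MvPolynomial.induction_on with
  | C a => simp
  | add p q hp hq => simp only [map_add, hp, hq]
  | mul_X p i hp =>
    rw [map_mul, map_mul, map_mul, hp, shift_X, taylorHom_X, map_add, map_C, map_X]
    simp [add_comm]

theorem coeff_shift [Algebra R S] (β : σ → S) (P : MvPolynomial σ R) (I : σ →₀ ℕ) :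
    coeff I (shift β P) = aeval β (hasse I P) := by
  rw [shift_eq_map_taylorHom, coeff_map, hasse_apply]
  rfl

theorem taylorHom_shift [Algebra R S] (β : σ → S) (P : MvPolynomial σ R) :
    taylorHom σ S (shift β P) =
      map (shift β : MvPolynomial σ R →ₐ[R] MvPolynomial σ S).toRingHom (taylorHom σ R P) := by
  induction P using MvPolynomial.induction_on with
  | C a => simp
  | add p q hp hq => simp only [map_add, hp, hq]
  | mul_X p i hp =>
    rw [map_mul, map_mul, map_mul, map_mul, hp, shift_X, taylorHom_X, map_add, map_add, map_C,
      map_X, taylorHom_X, taylorHom_C]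
    simp only [AlgHom.toRingHom_eq_coe, RingHom.coe_coe, shift_X, C_add]
    ring

theorem hasse_shift [Algebra R S] (β : σ → S) (P : MvPolynomial σ R) (I : σ →₀ ℕ) :
    hasse I (shift β P) = shift β (hasse I P) := by
  rw [hasse_apply, taylorHom_shift, coeff_map, hasse_apply]
  rfl

theorem shift_shift [Algebra R S] (β γ : σ → S) (P : MvPolynomial σ R) :
    shift γ (shift β P) = shift (β + γ) P := by
  induction P using MvPolynomial.induction_on with
  | C a => simp
  | add p q hp hq => simp only [map_add, hp, hq]
  | mul_X p i hp =>
    rw [map_mul, map_mul, map_mul, hp, shift_X, shift_X, map_add, shift_X, shift_C]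
    simp only [Pi.add_apply, C_add, Algebra.algebraMap_self, RingHom.id_apply]
    ring

theorem shift_injective [Algebra R S] (h : Function.Injective (algebraMap R S)) (β : σ → S) :
    Function.Injective (shift β : MvPolynomial σ R →ₐ[R] MvPolynomial σ S) := by
  intro P Q hPQ
  have h0 := congrArg (shift (-β)) hPQ
  rw [shift_shift, shift_shift, add_neg_cancel] at h0
  have key : ∀ P : MvPolynomial σ R, shift (0 : σ → S) P = map (algebraMap R S) P := by
    intro P
    induction P using MvPolynomial.induction_on with
    | C a => simp
    | add p q hp hq => simp only [map_add, hp, hq]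
    | mul_X p i hp => simp [hp]
  rw [key, key] at h0
  exact map_injective _ h h0

variable [Fintype σ]

theorem hasse_monomial (I A : σ →₀ ℕ) (a : R) :
    hasse I (monomial A a) = monomial (A - I) (a * ∏ i, ((A i).choose (I i) : R)) := by
  classical
  have h1 : (monomial A a : MvPolynomial σ R) = a • ∏ i, X i ^ A i := by
    rw [monomial_eq, Finsupp.prod_fintype _ _ (by simp), smul_eq_C_mul]
  have h2 : taylorHom σ R (∏ i, X i ^ A i) = ∏ i, (X i + C (X i)) ^ A i := by
    simp [taylorHom, add_comm]
  rw [h1, map_smul, hasse_apply, h2]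
  simp_rw [add_pow]
  rw [Finset.prod_univ_sum, coeff_sum]
  have h3 : ∀ x : σ → ℕ, (∏ i, (X i : MvPolynomial σ (MvPolynomial σ R)) ^ x i *
      C (X i) ^ (A i - x i) * ((A i).choose (x i) : MvPolynomial σ (MvPolynomial σ R))) =
      monomial (Finsupp.equivFunOnFinite.symm x)
        (∏ i, (X i ^ (A i - x i) * ((A i).choose (x i) : MvPolynomial σ R))) := by
    intro x
    rw [monomial_eq, Finsupp.prod_fintype _ _ (by simp)]
    simp [Finset.prod_mul_distrib, map_prod]
    ring
  simp_rw [h3, coeff_monomial]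
  rw [Finset.sum_eq_single (I : σ → ℕ)]
  · rw [if_pos (by ext; simp)]
    rw [mul_comm a, ← smul_eq_mul, ← smul_monomial, monomial_eq (s := A - I),
      Finsupp.prod_fintype _ _ (by simp)]
    simp [Finset.prod_mul_distrib, smul_eq_C_mul, map_prod]
    ring
  · intro b _ hb
    rw [if_neg]
    rintro rfl
    exact hb (by ext; simp)
  · intro hI
    rw [Fintype.mem_piFinset] at hI
    push Not at hI
    obtain ⟨i, hi⟩ := hI
    rw [if_pos (by ext; simp)]
    apply Finset.prod_eq_zero (Finset.mem_univ i)
    rw [Nat.choose_eq_zero_of_lt (by simpa using hi)]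
    simp

theorem hasse_eq_sum (I : σ →₀ ℕ) (P : MvPolynomial σ R) :
    hasse I P = ∑ A ∈ P.support,
      monomial (A - I) (coeff A P * ∏ i, ((A i).choose (I i) : R)) := by
  conv_lhs => rw [P.as_sum, map_sum]
  simp_rw [hasse_monomial]

theorem exists_of_mem_support_hasse {I B : σ →₀ ℕ} {P : MvPolynomial σ R}
    (h : B ∈ (hasse I P).support) : B + I ∈ P.support := by
  classical
  rw [hasse_eq_sum] at h
  obtain ⟨A, hA, hB⟩ := Finset.mem_biUnion.1 (support_sum h)
  have hle : I ≤ A := by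
    intro i
    by_contra hi
    rw [Finset.prod_eq_zero (Finset.mem_univ i)
      (by rw [Nat.choose_eq_zero_of_lt (not_le.1 hi), Nat.cast_zero])] at hB
    simp at hB
  have := Finset.mem_singleton.1 (support_monomial_subset hB)
  rw [this, tsub_add_cancel_of_le hle]
  exact hA

theorem degreeOf_hasse_le (I : σ →₀ ℕ) (P : MvPolynomial σ R) (i : σ) :
    degreeOf i (hasse I P) ≤ degreeOf i P := by
  rw [degreeOf_le_iff]
  intro B hB
  have := monomial_le_degreeOf i (exists_of_mem_support_hasse hB)
  simp only [Finsupp.add_apply] at this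
  omega

end Hasse

section L1

variable {σ R : Type*} [NormedCommRing R]

/-- The sum of the norms of the coefficients. -/
noncomputable def l1 (P : MvPolynomial σ R) : ℝ := ∑ A ∈ P.support, ‖coeff A P‖

theorem l1_eq_sum {P : MvPolynomial σ R} {s : Finset (σ →₀ ℕ)} (h : P.support ⊆ s) :
    l1 P = ∑ A ∈ s, ‖coeff A P‖ :=
  Finset.sum_subset h fun A _ hA => by rw [notMem_support_iff.1 hA, norm_zero]

theorem l1_nonneg (P : MvPolynomial σ R) : 0 ≤ l1 P := Finset.sum_nonneg fun _ _ => norm_nonneg _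

@[simp] theorem l1_zero : l1 (0 : MvPolynomial σ R) = 0 := by simp [l1]

theorem norm_coeff_le_l1 (P : MvPolynomial σ R) (A : σ →₀ ℕ) : ‖coeff A P‖ ≤ l1 P := by
  classical
  rw [l1_eq_sum (Finset.subset_insert A P.support)]
  exact Finset.single_le_sum (f := fun A => ‖coeff A P‖) (fun _ _ => norm_nonneg _)
    (Finset.mem_insert_self _ _)

theorem l1_add_le (P Q : MvPolynomial σ R) : l1 (P + Q) ≤ l1 P + l1 Q := by
  classical
  rw [l1_eq_sum (support_add (p := P) (q := Q)), l1_eq_sum (P := P) Finset.subset_union_left,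
    l1_eq_sum (P := Q) Finset.subset_union_right, ← Finset.sum_add_distrib]
  exact Finset.sum_le_sum fun A _ => by rw [coeff_add]; exact norm_add_le _ _

theorem l1_sum_le {ι : Type*} (s : Finset ι) (f : ι → MvPolynomial σ R) :
    l1 (∑ i ∈ s, f i) ≤ ∑ i ∈ s, l1 (f i) := by
  classical
  induction s using Finset.induction_on with
  | empty => simp
  | insert a s ha ih =>
    rw [Finset.sum_insert ha, Finset.sum_insert ha]
    exact (l1_add_le _ _).trans (by gcongr)

theorem l1_monomial (A : σ →₀ ℕ) (a : R) : l1 (monomial A a) = ‖a‖ := by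
  classical
  rw [l1_eq_sum support_monomial_subset]
  simp

@[simp] theorem l1_neg (P : MvPolynomial σ R) : l1 (-P) = l1 P := by
  simp [l1]

theorem l1_mul_le (P Q : MvPolynomial σ R) : l1 (P * Q) ≤ l1 P * l1 Q := by
  conv_lhs => rw [P.as_sum, Q.as_sum, Finset.sum_mul_sum]
  rw [l1.eq_def P, l1.eq_def Q, Finset.sum_mul_sum]
  refine (l1_sum_le _ _).trans (Finset.sum_le_sum fun A _ => (l1_sum_le _ _).trans
    (Finset.sum_le_sum fun B _ => ?_))
  rw [monomial_mul, l1_monomial]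
  exact norm_mul_le _ _

theorem l1_one [NormOneClass R] : l1 (1 : MvPolynomial σ R) = 1 := by
  rw [← C_1, C_apply, l1_monomial, norm_one]

theorem l1_prod_le [NormOneClass R] {ι : Type*} (s : Finset ι) (f : ι → MvPolynomial σ R) :
    l1 (∏ i ∈ s, f i) ≤ ∏ i ∈ s, l1 (f i) := by
  classical
  induction s using Finset.induction_on with
  | empty => simp [l1_one]
  | insert a s ha ih =>
    rw [Finset.prod_insert ha, Finset.prod_insert ha]
    exact (l1_mul_le _ _).trans (by gcongr; exact l1_nonneg _)

theorem l1_det_le [NormOneClass R] {k : ℕ} (M : Matrix (Fin k) (Fin k) (MvPolynomial σ R)) {b : ℝ}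
    (h : ∀ i j, l1 (M i j) ≤ b) : l1 M.det ≤ k.factorial * b ^ k := by
  rw [Matrix.det_apply]
  refine (l1_sum_le _ _).trans ?_
  have : ∀ τ ∈ (Finset.univ : Finset (Equiv.Perm (Fin k))),
      l1 (Equiv.Perm.sign τ • ∏ i, M (τ i) i) ≤ b ^ k := by
    intro τ _
    have h1 : l1 (∏ i, M (τ i) i) ≤ b ^ k := by
      refine (l1_prod_le _ _).trans ?_
      refine (Finset.prod_le_prod (fun _ _ => l1_nonneg _) fun i _ => h (τ i) i).trans ?_
      simp
    rcases Int.units_eq_one_or (Equiv.Perm.sign τ) with h' | h' <;> simpa [h'] using h1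
  refine (Finset.sum_le_sum this).trans ?_
  simp [Fintype.card_perm]

theorem l1_hasse_le [Fintype σ] [NormOneClass R] {N : ℕ} (I : σ →₀ ℕ) {P : MvPolynomial σ R}
    (h : ∀ A ∈ P.support, ∑ i, A i ≤ N) : l1 (hasse I P) ≤ 2 ^ N * l1 P := by
  rw [hasse_eq_sum, l1.eq_def P, Finset.mul_sum]
  refine (l1_sum_le _ _).trans (Finset.sum_le_sum fun A hA => ?_)
  rw [l1_monomial, mul_comm]
  refine (norm_mul_le _ _).trans ?_
  gcongr
  rw [← Nat.cast_prod]
  refine (Nat.norm_cast_le _).trans ?_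
  rw [norm_one, mul_one]
  have : ∏ i, (A i).choose (I i) ≤ 2 ^ N :=
    calc _ ≤ ∏ i, 2 ^ A i := Finset.prod_le_prod' fun i _ => Nat.choose_le_two_pow _ _
      _ = 2 ^ ∑ i, A i := Finset.prod_pow_eq_pow_sum _ _ _
      _ ≤ 2 ^ N := Nat.pow_le_pow_right (by norm_num) (h A hA)
  exact_mod_cast this

theorem sum_le_of_degreeOf_le [Fintype σ] {R : Type*} [CommRing R] {P : MvPolynomial σ R}
    {r : σ → ℕ} (h : ∀ i, degreeOf i P ≤ r i) {A : σ →₀ ℕ} (hA : A ∈ P.support) :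
    ∑ i, A i ≤ ∑ i, r i :=
  Finset.sum_le_sum fun i _ => (monomial_le_degreeOf i hA).trans (h i)

end L1

end MvPolynomial

namespace Polynomial

theorem coeff_taylor_hasseDeriv {R : Type*} [CommRing R] (t : R) (g : R[X]) (l n : ℕ) :
    (taylor t (hasseDeriv l g)).coeff n = ((n + l).choose n : R) * (taylor t g).coeff (n + l) := by
  rw [taylor_coeff, taylor_coeff, ← LinearMap.comp_apply, hasseDeriv_comp]
  simp

theorem det_hasseDeriv_ne_zero {F : Type*} [Field F] [CharZero F] {k : ℕ} {f : Fin k → F[X]}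
    (hf : LinearIndependent F f) :
    (Matrix.of fun (l j : Fin k) => hasseDeriv (l : ℕ) (f j)).det ≠ 0 := by
  classical
  intro hdet
  obtain ⟨a, ha, hM⟩ := Matrix.exists_vecMul_eq_zero_iff.2 hdet
  have hrel : ∀ j, ∑ l : Fin k, a l * hasseDeriv (l : ℕ) (f j) = 0 := fun j => by
    simpa [Matrix.vecMul, dotProduct] using congrFun hM j
  obtain ⟨e, he, hmax⟩ : ∃ e, a e ≠ 0 ∧ ∀ l, e < l → a l = 0 := by
    have hne : (Finset.univ.filter fun l => a l ≠ 0).Nonempty := by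
      obtain ⟨l, hl⟩ := Function.ne_iff.1 ha
      exact ⟨l, by simpa using hl⟩
    refine ⟨_, (Finset.mem_filter.1 (Finset.max'_mem _ hne)).2, fun l hl => ?_⟩
    by_contra h
    exact absurd (Finset.le_max' _ l (by simpa using h)) (not_le.2 hl)
  obtain ⟨t, ht⟩ : ∃ t, (a e).eval t ≠ 0 := by
    by_contra! h
    exact he (Polynomial.funext (by simpa using h))
  let Φ : (Fin k → F) →ₗ[F] (Fin e → F) :=
    LinearMap.pi fun i => (lcoeff F (i : ℕ)) ∘ₗ (taylor t) ∘ₗ (Fintype.linearCombination F f)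
  obtain ⟨c, hc, hc0⟩ := (Submodule.ne_bot_iff _).1
    (LinearMap.ker_ne_bot_of_finrank_lt (f := Φ) (by simp))
  set g := Fintype.linearCombination F f c with hg
  have hg0 : g ≠ 0 := by
    intro h
    refine hc0 ?_
    ext i
    exact Fintype.linearIndependent_iff.1 hf c
      ((Fintype.linearCombination_apply F f c).symm.trans h) i
  have hcoef : ∀ i < (e : ℕ), (taylor t g).coeff i = 0 := fun i hi =>
    congrFun (LinearMap.mem_ker.1 hc) ⟨i, hi⟩
  have hh0 : taylor t g ≠ 0 := by
    simpa using hg0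
  set s := (taylor t g).natTrailingDegree
  have hs : (taylor t g).coeff s ≠ 0 := trailingCoeff_nonzero_iff_nonzero.2 hh0
  have hes : (e : ℕ) ≤ s := by
    by_contra! h
    exact hs (hcoef s h)
  have hlow : ∀ i < s, (taylor t g).coeff i = 0 := fun i hi =>
    coeff_eq_zero_of_lt_natTrailingDegree hi
  have hgrel : ∑ l : Fin k, a l * hasseDeriv (l : ℕ) g = 0 := by
    simp only [hg, Fintype.linearCombination_apply, map_sum, map_smul, Finset.mul_sum]
    rw [Finset.sum_comm]
    simp only [mul_smul_comm, ← Finset.smul_sum, hrel, smul_zero, Finset.sum_const_zero]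
  have h1 : ∑ l : Fin k, (taylor t (a l) * taylor t (hasseDeriv (l : ℕ) g)).coeff (s - e) = 0 := by
    have := congrArg (fun p => (taylor t p).coeff (s - e)) hgrel
    simpa only [map_sum, taylor_mul, finsetSum_coeff, map_zero, coeff_zero] using this
  rw [Finset.sum_eq_single e] at h1
  · rw [coeff_mul, Finset.sum_eq_single (0, s - (e : ℕ))] at h1
    · rw [coeff_taylor_hasseDeriv, Nat.sub_add_cancel hes, taylor_coeff_zero] at h1
      have : ((s.choose (s - e) : ℕ) : F) ≠ 0 :=
        Nat.cast_ne_zero.2 (Nat.choose_pos (Nat.sub_le _ _)).ne'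
      exact mul_ne_zero ht (mul_ne_zero this hs) h1
    · rintro ⟨i, j⟩ hij hne
      have := Finset.HasAntidiagonal.mem_antidiagonal.1 hij
      simp only [ne_eq, Prod.mk.injEq, not_and] at hne this
      rw [coeff_taylor_hasseDeriv, hlow _ (by grind), mul_zero, mul_zero]
    · simp
  · intro l _ hle
    rcases lt_or_gt_of_ne hle with h | h
    · rw [coeff_mul]
      refine Finset.sum_eq_zero fun ⟨i, j⟩ hij => ?_
      have := Finset.HasAntidiagonal.mem_antidiagonal.1 hij
      have h' : (l : ℕ) < e := h
      simp only at this
      rw [coeff_taylor_hasseDeriv, hlow _ (by omega), mul_zero, mul_zero]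
    · simp [hmax l h]
  · simp

theorem coeff_taylor_X_map_C {R : Type*} [CommRing R] (f : R[X]) (l : ℕ) :
    (taylor X (f.map C)).coeff l = hasseDeriv l f := by
  have : hasseDeriv l (f.map C) = (hasseDeriv l f).map C := by
    ext1 n
    rw [hasseDeriv_coeff, coeff_map, coeff_map, hasseDeriv_coeff, map_mul, map_natCast]
  rw [taylor_coeff, this, eval_map, eval₂_C_X]

end Polynomial

namespace MvPolynomial

open Polynomial in
/-- A Hasse derivative of a specialization to a curve is a combination of the specializations
of the Hasse derivatives of at most the same total order. -/
theorem exists_hasseDeriv_aeval {σ F : Type*} [Fintype σ] [CommRing F] (κ : σ → F[X]) (l : ℕ) :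
    ∃ g : (σ →₀ ℕ) → F[X], (∀ I, l < ∑ i, I i → g I = 0) ∧
      ∀ (P : MvPolynomial σ F) (s : Finset (σ →₀ ℕ)), (taylorHom σ F P).support ⊆ s →
        hasseDeriv l (aeval κ P) = ∑ I ∈ s, g I * aeval κ (hasse I P) := by
  classical
  let Y : σ → F[X][X] := fun i => taylor Polynomial.X ((κ i).map Polynomial.C) - Polynomial.C (κ i)
  have hY : ∀ i, Polynomial.X ∣ Y i := fun i => by
    rw [Polynomial.X_dvd_iff]
    rw [Polynomial.coeff_sub, coeff_taylor_X_map_C, hasseDeriv_zero, Polynomial.coeff_C_zero,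
      LinearMap.id_apply, sub_self]
  refine ⟨fun I => (∏ i, Y i ^ I i).coeff l, fun I hI => ?_, fun P s hs => ?_⟩
  · have : (Polynomial.X : F[X][X]) ^ (∑ i, I i) ∣ ∏ i, Y i ^ I i := by
      rw [← Finset.prod_pow_eq_pow_sum]
      exact Finset.prod_dvd_prod_of_dvd _ _ fun i _ => pow_dvd_pow_of_dvd (hY i) _
    exact Polynomial.X_pow_dvd_iff.1 this l hI
  · have key : taylor Polynomial.X ((aeval κ P).map Polynomial.C) =
        eval₂ (Polynomial.C.comp (aeval κ : MvPolynomial σ F →ₐ[F] F[X]).toRingHom) Y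
          (taylorHom σ F P) := by
      induction P using MvPolynomial.induction_on generalizing s with
      | C a => simp
      | add p q hp hq =>
        rw [map_add, map_add, Polynomial.map_add, map_add, eval₂_add, hp _ subset_rfl,
          hq _ subset_rfl]
      | mul_X p i hp =>
        rw [map_mul, map_mul, Polynomial.map_mul, taylor_mul, eval₂_mul, hp _ subset_rfl,
          taylorHom_X, eval₂_add, eval₂_X, eval₂_C, aeval_X]
        congr 1
        simp [Y]
    rw [← coeff_taylor_X_map_C, key, eval₂_eq', Finset.sum_subset hs]
    · rw [Polynomial.finsetSum_coeff]
      refine Finset.sum_congr rfl fun I _ => ?_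
      rw [hasse_apply, RingHom.comp_apply, Polynomial.coeff_C_mul, mul_comm]
      rfl
    · intro A _ hA
      rw [notMem_support_iff.1 hA]
      simp

open Polynomial in
theorem aeval_X_pow_eq_zero {F : Type*} [CommRing F] {n N : ℕ} {P : MvPolynomial (Fin n) F}
    (hN : ∀ i, degreeOf i P < N)
    (h : aeval (fun i : Fin n => (Polynomial.X ^ N ^ (i : ℕ) : F[X])) P = 0) : P = 0 := by
  have hinj : ∀ A ∈ P.support, ∀ B ∈ P.support,
      ∑ i, A i * N ^ (i : ℕ) = ∑ i, B i * N ^ (i : ℕ) → A = B := by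
    intro A hA B hB hAB
    have hA' : ∀ i, A i < N := fun i => (monomial_le_degreeOf i hA).trans_lt (hN i)
    have hB' : ∀ i, B i < N := fun i => (monomial_le_degreeOf i hB).trans_lt (hN i)
    have := finFunctionFinEquiv.injective (a₁ := fun i => (⟨A i, hA' i⟩ : Fin N))
      (a₂ := fun i => (⟨B i, hB' i⟩ : Fin N)) (by ext; simpa [finFunctionFinEquiv_apply] using hAB)
    ext i
    simpa using congrFun this i
  ext A
  rw [coeff_zero]
  by_contra hA
  have hA' : A ∈ P.support := mem_support_iff.2 hA
  have h2 := congrArg (fun p => p.coeff (∑ i, A i * N ^ (i : ℕ))) h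
  simp only [aeval_def, eval₂_eq', Polynomial.finsetSum_coeff, Polynomial.coeff_zero] at h2
  rw [Finset.sum_eq_single A] at h2
  · simp [Finset.prod_pow_eq_pow_sum, ← pow_mul, mul_comm (N ^ _)] at h2
    exact hA h2
  · intro B hB hBA
    simp only [← pow_mul, Finset.prod_pow_eq_pow_sum, Polynomial.algebraMap_apply,
      Algebra.algebraMap_self, RingHom.id_apply, Polynomial.coeff_C_mul, Polynomial.coeff_X_pow]
    rw [if_neg, mul_zero]
    intro heq
    exact hBA (hinj B hB A hA' (by simp only [mul_comm (N ^ _)] at heq; exact heq.symm))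
  · exact fun h => absurd hA' h

open Polynomial in
/-- Linearly independent polynomials have a nonvanishing generalized Wronskian. -/
theorem exists_det_hasse_ne_zero {F : Type*} [Field F] [CharZero F] {n k : ℕ}
    {φ : Fin k → MvPolynomial (Fin n) F} (hφ : LinearIndependent F φ) :
    ∃ I : Fin k → (Fin n →₀ ℕ), (∀ l, ∑ i, I l i ≤ l) ∧
      (Matrix.of fun l j => hasse (I l) (φ j)).det ≠ 0 := by
  classical
  obtain ⟨N, hpos, hN⟩ : ∃ N, 0 < N ∧ ∀ i j, degreeOf i (φ j) < N := by
    refine ⟨(∑ i, ∑ j, degreeOf i (φ j)) + 1, Nat.succ_pos _, fun i j => Nat.lt_succ_of_le ?_⟩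
    exact (Finset.single_le_sum (f := fun j => degreeOf i (φ j)) (fun _ _ => Nat.zero_le _)
      (Finset.mem_univ j)).trans (Finset.single_le_sum (f := fun i => ∑ j, degreeOf i (φ j))
      (fun _ _ => Nat.zero_le _) (Finset.mem_univ i))
  set κ : Fin n → F[X] := fun i => Polynomial.X ^ N ^ (i : ℕ)
  have hf : LinearIndependent F fun j => aeval κ (φ j) := by
    rw [Fintype.linearIndependent_iff] at hφ ⊢
    intro c hc
    refine hφ c (aeval_X_pow_eq_zero (N := N) ?_ ?_)
    · intro i
      refine (degreeOf_sum_le i _ _).trans_lt ((Finset.sup_lt_iff hpos).2 fun j _ => ?_)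
      rw [smul_eq_C_mul]
      exact (degreeOf_C_mul_le _ _ _).trans_lt (hN i j)
    · simpa [map_sum, map_smul] using hc
  choose g hg hgs using fun l : ℕ => exists_hasseDeriv_aeval κ l
  set s : Finset (Fin n →₀ ℕ) := Finset.univ.biUnion fun j => (taylorHom (Fin n) F (φ j)).support
  have hs : ∀ j, (taylorHom (Fin n) F (φ j)).support ⊆ s := fun j =>
    Finset.subset_biUnion_of_mem (fun j => (taylorHom (Fin n) F (φ j)).support) (Finset.mem_univ j)
  have hM : (Matrix.of fun (l j : Fin k) => hasseDeriv (l : ℕ) (aeval κ (φ j))) =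
      fun l : Fin k => ∑ I ∈ s, g l I • fun j => aeval κ (hasse I (φ j)) := by
    funext l j
    rw [Matrix.of_apply, hgs l (φ j) s (hs j), Finset.sum_apply]
    rfl
  have hdet := det_hasseDeriv_ne_zero hf
  rw [hM] at hdet
  change Matrix.detRowAlternating.toMultilinearMap _ ≠ 0 at hdet
  rw [MultilinearMap.map_sum_finset] at hdet
  obtain ⟨I, _, hI⟩ := Finset.exists_ne_zero_of_sum_ne_zero hdet
  rw [MultilinearMap.map_smul_univ] at hI
  refine ⟨I, fun l => ?_, fun h0 => ?_⟩
  · by_contra! h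
    refine hI ?_
    rw [Finset.prod_eq_zero (Finset.mem_univ l) (hg l (I l) h), zero_smul]
  · refine hI ?_
    have h1 := congrArg (aeval κ) h0
    rw [AlgHom.map_det, map_zero] at h1
    rw [smul_eq_zero]
    right
    exact h1

end MvPolynomial

theorem Polynomial.pow_rootMultiplicity_dvd_leadingCoeff {V : Polynomial ℤ}
    {p : ℤ} {q : ℕ} (hq : 0 < q) (hpq : IsCoprime p (q : ℤ)) :
    (q : ℤ) ^ (V.map (Int.castRingHom ℚ)).rootMultiplicity (p / q : ℚ) ∣ V.leadingCoeff := by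
  set v := (V.map (Int.castRingHom ℚ)).rootMultiplicity (p / q : ℚ)
  set L : Polynomial ℤ := C (q : ℤ) * X + C (-p)
  have hq' : (q : ℤ) ≠ 0 := by exact_mod_cast hq.ne'
  have hqQ : (q : ℚ) ≠ 0 := by exact_mod_cast hq.ne'
  have hprim : L.IsPrimitive := by
    rw [Polynomial.isPrimitive_iff_isUnit_of_C_dvd]
    intro r hr
    rw [Polynomial.C_dvd_iff_dvd_coeff] at hr
    have h0 := hr 0
    have h1 := hr 1
    simp only [L, C_neg, Polynomial.coeff_add, Polynomial.coeff_C_mul, Polynomial.coeff_X_zero,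
      Polynomial.coeff_X_one, Polynomial.coeff_C, mul_zero, mul_one, zero_add, add_zero, if_true,
      one_ne_zero, if_false, Polynomial.coeff_neg, neg_zero, dvd_neg] at h0 h1
    exact hpq.isUnit_of_dvd' h0 h1
  have hLmap : L.map (Int.castRingHom ℚ) = C (q : ℚ) * (X - C (p / q : ℚ)) := by
    simp only [L, Polynomial.map_add, Polynomial.map_mul, Polynomial.map_C, Polynomial.map_X,
      mul_sub, ← C_mul]
    rw [mul_div_cancel₀ _ hqQ]
    simp [sub_eq_add_neg]
  have hprim' : (L ^ v).IsPrimitive := by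
    induction v with
    | zero => simp
    | succ v ih => rw [pow_succ]; exact ih.mul hprim
  have hdvd : L ^ v ∣ V := by
    rw [Polynomial.IsPrimitive.Int.dvd_iff_map_cast_dvd_map_cast _ _ hprim',
      Polynomial.map_pow, hLmap, mul_pow, ← C_pow]
    exact (Polynomial.C_mul_dvd (pow_ne_zero _ hqQ)).2 (Polynomial.pow_rootMultiplicity_dvd _ _)
  obtain ⟨R, hR⟩ := hdvd
  rw [hR, Polynomial.leadingCoeff_mul, Polynomial.leadingCoeff_pow,
    Polynomial.leadingCoeff_linear hq']
  exact dvd_mul_right _ _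

namespace MvPolynomial

section Separated

variable {n : ℕ} {R : Type*} [CommRing R]

theorem aeval_monomial_mul_rename (b : ℕ) (c : R) (A : Fin n →₀ ℕ) (a : R) :
    Polynomial.aeval (X 0 : MvPolynomial (Fin (n + 1)) R) (Polynomial.monomial b c) *
      rename Fin.succ (monomial A a) = monomial (Finsupp.cons b A) (c * a) := by
  rw [Polynomial.aeval_monomial, monomial_eq (s := A), monomial_eq (s := Finsupp.cons b A),
    Finsupp.prod_fintype _ _ (by simp), Finsupp.prod_fintype _ _ (by simp), Fin.prod_univ_succ]
  simp [map_prod, algebraMap_eq]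
  ring

@[elab_as_elim]
theorem separated_induction {motive : Polynomial R → MvPolynomial (Fin n) R → Prop}
    (sum_left : ∀ ψ ψ' φ, motive ψ φ → motive ψ' φ → motive (ψ + ψ') φ)
    (sum_right : ∀ ψ φ φ', motive ψ φ → motive ψ φ' → motive ψ (φ + φ'))
    (mono : ∀ b c A a, motive (Polynomial.monomial b c) (monomial A a))
    (ψ : Polynomial R) (φ : MvPolynomial (Fin n) R) : motive ψ φ := by
  induction ψ using Polynomial.induction_on' with
  | add p q hp hq => exact sum_left _ _ _ hp hq
  | monomial b c =>
    induction φ using MvPolynomial.induction_on' with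
    | monomial A a => exact mono _ _ _ _
    | add p q hp hq => exact sum_right _ _ _ hp hq

theorem coeff_cons_separated (ψ : Polynomial R) (φ : MvPolynomial (Fin n) R) (b : ℕ)
    (A : Fin n →₀ ℕ) :
    coeff (Finsupp.cons b A) (Polynomial.aeval (X 0 : MvPolynomial (Fin (n + 1)) R) ψ *
      rename Fin.succ φ) = ψ.coeff b * coeff A φ := by
  classical
  induction ψ, φ using separated_induction with
  | sum_left ψ ψ' φ h h' => simp [add_mul, h, h']
  | sum_right ψ φ φ' h h' => simp [mul_add, h, h']
  | mono b' c A' a =>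
    rw [aeval_monomial_mul_rename, coeff_monomial, coeff_monomial, Polynomial.coeff_monomial]
    by_cases hb : b' = b
    · by_cases hA : A' = A
      · simp [hb, hA]
      · rw [if_neg, if_neg hA, mul_zero]
        intro h
        exact hA (Finsupp.cons_right_injective b (hb ▸ h))
    · rw [if_neg, if_neg hb, zero_mul]
      intro h
      simpa [hb] using DFunLike.congr_fun h 0

theorem hasse_cons_separated (ψ : Polynomial R) (φ : MvPolynomial (Fin n) R) (l : ℕ)
    (I : Fin n →₀ ℕ) :
    hasse (Finsupp.cons l I) (Polynomial.aeval (X 0 : MvPolynomial (Fin (n + 1)) R) ψ *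
      rename Fin.succ φ) =
    Polynomial.aeval (X 0 : MvPolynomial (Fin (n + 1)) R) (Polynomial.hasseDeriv l ψ) *
      rename Fin.succ (hasse I φ) := by
  induction ψ, φ using separated_induction with
  | sum_left ψ ψ' φ h h' => simp only [map_add, add_mul, h, h']
  | sum_right ψ φ φ' h h' => simp only [map_add, mul_add, h, h']
  | mono b c A a =>
    rw [aeval_monomial_mul_rename, hasse_monomial, hasse_monomial,
      Polynomial.hasseDeriv_monomial, aeval_monomial_mul_rename, Fin.prod_univ_succ]
    have : (Finsupp.cons b A - Finsupp.cons l I : Fin (n + 1) →₀ ℕ) =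
        Finsupp.cons (b - l) (A - I) := by
      ext i
      refine Fin.cases ?_ (fun i => ?_) i <;> simp
    rw [this]
    simp only [Finsupp.cons_zero, Finsupp.cons_succ]
    congr 1
    ring

theorem shift_separated (β : Fin (n + 1) → R) (ψ : Polynomial R) (φ : MvPolynomial (Fin n) R) :
    shift β (Polynomial.aeval (X 0 : MvPolynomial (Fin (n + 1)) R) ψ * rename Fin.succ φ) =
      Polynomial.aeval (X 0 : MvPolynomial (Fin (n + 1)) R) (Polynomial.taylor (β 0) ψ) *
        rename Fin.succ (shift (fun i => β i.succ) φ) := by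
  rw [map_mul]
  congr 1
  · rw [← Polynomial.aeval_algHom_apply, shift_X, Polynomial.taylor_apply,
      Polynomial.aeval_comp]
    simp [algebraMap_eq]
  · induction φ using MvPolynomial.induction_on with
    | C a => simp
    | add p q hp hq => simp only [map_add, hp, hq]
    | mul_X p i hp => rw [map_mul, map_mul, map_mul, map_mul, hp]; simp

end Separated

/-- A minimal decomposition separating the variable `X 0` from the others. -/
theorem exists_separated_sum {n r : ℕ} {F : Type*} [Field F] {P : MvPolynomial (Fin (n + 1)) F}
    (hr : degreeOf 0 P ≤ r) :
    ∃ k ≤ r + 1, ∃ (b : Fin k → ℕ) (ψ : Fin k → Polynomial F) (φ : Fin k → MvPolynomial (Fin n) F),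
      LinearIndependent F ψ ∧ LinearIndependent F φ ∧
      (∀ j A, coeff A (φ j) = coeff (Finsupp.cons (b j) A) P) ∧
      P = ∑ j, Polynomial.aeval (X 0 : MvPolynomial (Fin (n + 1)) F) (ψ j) *
        rename Fin.succ (φ j) := by
  classical
  let v : Fin (r + 1) → MvPolynomial (Fin n) F := fun b => (finSuccEquiv F n P).coeff b
  have hv : ∀ b A, coeff A (v b) = coeff (Finsupp.cons (b : ℕ) A) P := fun b A =>
    finSuccEquiv_coeff_coeff _ _ _
  obtain ⟨κ, a, ha, hspan, hind⟩ := exists_linearIndependent' F v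
  have : Finite κ := Finite.of_injective a ha
  have := Fintype.ofFinite κ
  have hcard : Fintype.card κ ≤ r + 1 := by
    simpa using Fintype.card_le_of_injective a ha
  let e := (Fintype.equivFin κ).symm
  have hmem : ∀ b, ∃ g : κ → F, ∑ j, g j • v (a j) = v b := fun b => by
    have : v b ∈ Submodule.span F (Set.range (v ∘ a)) :=
      hspan ▸ Submodule.subset_span (Set.mem_range_self b)
    exact (Submodule.mem_span_range_iff_exists_fun F).1 this
  choose g hg using hmem
  have hga : ∀ i j, g (a i) j = if j = i then 1 else 0 := by
    intro i j
    have h1 : ∑ j, (g (a i) j - if j = i then 1 else 0) • (v ∘ a) j = 0 := by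
      simp only [sub_smul, Finset.sum_sub_distrib, Function.comp_apply, hg]
      simp
    exact sub_eq_zero.1 (Fintype.linearIndependent_iff.1 hind _ h1 j)
  let ψ : κ → Polynomial F := fun j => ∑ b : Fin (r + 1), Polynomial.monomial (b : ℕ) (g b j)
  have hψ : ∀ j (b : Fin (r + 1)), (ψ j).coeff b = g b j := fun j b => by
    simp only [ψ, Polynomial.finsetSum_coeff, Polynomial.coeff_monomial]
    rw [Finset.sum_eq_single b] <;> simp +contextual [Fin.ext_iff]
  have hψ' : ∀ j (b : ℕ), r < b → (ψ j).coeff b = 0 := fun j b hb => by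
    simp only [ψ, Polynomial.finsetSum_coeff, Polynomial.coeff_monomial]
    refine Finset.sum_eq_zero fun i _ => if_neg ?_
    have := i.2
    omega
  have hψind : LinearIndependent F ψ := by
    rw [Fintype.linearIndependent_iff]
    intro c hc i
    have := congrArg (fun p => p.coeff (a i)) hc
    simpa [Polynomial.finsetSum_coeff, hψ, hga] using this
  refine ⟨Fintype.card κ, hcard, fun j => a (e j), fun j => ψ (e j), fun j => v (a (e j)),
    hψind.comp e e.injective, hind.comp e e.injective, fun j A => hv _ A, ?_⟩
  rw [Equiv.sum_comp e fun j => Polynomial.aeval (X 0 : MvPolynomial (Fin (n + 1)) F) (ψ j) *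
    rename Fin.succ (v (a j))]
  ext m
  rw [← Finsupp.cons_tail m, coeff_sum]
  simp only [coeff_cons_separated]
  rcases lt_or_ge r (m 0) with h | h
  · simp only [hψ' _ _ h, zero_mul, Finset.sum_const_zero]
    by_contra hne
    have := monomial_le_degreeOf 0 (mem_support_iff.2 hne)
    simp at this
    omega
  · have h1 := hv ⟨m 0, by omega⟩ m.tail
    rw [← h1, ← hg, coeff_sum]
    refine Finset.sum_congr rfl fun j _ => ?_
    rw [coeff_smul, smul_eq_mul, ← hψ]

section Weight

variable {σ R : Type*} [Fintype σ] [CommRing R]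

/-- All monomials of `Q` have weight at least `t`. -/
def WeightGE (w : σ → ℝ) (t : ℝ) (Q : MvPolynomial σ R) : Prop :=
  ∀ A ∈ Q.support, t ≤ ∑ i, A i * w i

theorem WeightGE.mul {w : σ → ℝ} {s t : ℝ} {P Q : MvPolynomial σ R} (hP : WeightGE w s P)
    (hQ : WeightGE w t Q) : WeightGE w (s + t) (P * Q) := by
  classical
  intro A hA
  obtain ⟨B, hB, D, hD, rfl⟩ := Finset.mem_add.1 (support_mul P Q hA)
  simp only [Finsupp.add_apply, Nat.cast_add, add_mul, Finset.sum_add_distrib]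
  exact add_le_add (hP B hB) (hQ D hD)

theorem WeightGE.sum {w : σ → ℝ} {t : ℝ} {ι : Type*} {s : Finset ι} {f : ι → MvPolynomial σ R}
    (h : ∀ i ∈ s, WeightGE w t (f i)) : WeightGE w t (∑ i ∈ s, f i) := by
  classical
  intro A hA
  obtain ⟨i, hi, hAi⟩ := Finset.mem_biUnion.1 (support_sum hA)
  exact h i hi A hAi

theorem WeightGE.prod {w : σ → ℝ} {ι : Type*} {s : Finset ι} {t : ι → ℝ}
    {f : ι → MvPolynomial σ R} (h : ∀ i ∈ s, WeightGE w (t i) (f i)) :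
    WeightGE w (∑ i ∈ s, t i) (∏ i ∈ s, f i) := by
  classical
  induction s using Finset.induction_on with
  | empty =>
    intro A hA
    rw [Finset.prod_empty, ← C_1, C_apply] at hA
    have := Finset.mem_singleton.1 (support_monomial_subset hA)
    simp [this]
  | insert a s ha ih =>
    rw [Finset.sum_insert ha, Finset.prod_insert ha]
    exact (h a (Finset.mem_insert_self _ _)).mul
      (ih fun i hi => h i (Finset.mem_insert_of_mem hi))

theorem WeightGE.det {w : σ → ℝ} {k : ℕ} {t : Fin k → ℝ}
    {M : Matrix (Fin k) (Fin k) (MvPolynomial σ R)} (h : ∀ i j, WeightGE w (t i) (M i j)) :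
    WeightGE w (∑ i, t i) M.det := by
  rw [Matrix.det_apply]
  refine WeightGE.sum fun τ _ => ?_
  have h1 : WeightGE w (∑ i, t i) (∏ i, M (τ i) i) := by
    rw [← Equiv.sum_comp τ t]
    exact WeightGE.prod fun i _ => h (τ i) i
  rcases Int.units_eq_one_or (Equiv.Perm.sign τ) with h' | h'
  · simpa [h'] using h1
  · intro A hA
    exact h1 A (by simpa [h'] using hA)

theorem WeightGE.hasse {w : σ → ℝ} {t : ℝ} {Q : MvPolynomial σ R} (h : WeightGE w t Q)
    (I : σ →₀ ℕ) : WeightGE w (t - ∑ i, I i * w i) (hasse I Q) := by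
  intro B hB
  have := h _ (exists_of_mem_support_hasse hB)
  simp only [Finsupp.add_apply, Nat.cast_add, add_mul, Finset.sum_add_distrib] at this
  linarith

end Weight

theorem degreeOf_det_le {σ R : Type*} [CommRing R] {k d : ℕ}
    {M : Matrix (Fin k) (Fin k) (MvPolynomial σ R)} {i : σ} (h : ∀ a b, degreeOf i (M a b) ≤ d) :
    degreeOf i M.det ≤ k * d := by
  rw [Matrix.det_apply]
  refine (degreeOf_sum_le _ _ _).trans (Finset.sup_le fun τ _ => ?_)
  have h1 : degreeOf i (∏ j, M (τ j) j) ≤ k * d := by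
    refine (degreeOf_prod_le _ _ _).trans ((Finset.sum_le_sum fun j _ => h (τ j) j).trans ?_)
    simp
  rcases Int.units_eq_one_or (Equiv.Perm.sign τ) with h' | h'
  · simpa [h'] using h1
  · rw [h', Units.neg_smul, one_smul, degreeOf_neg]
    exact h1

theorem l1_coeff_finSuccEquiv_le {n : ℕ} {R : Type*} [NormedCommRing R]
    (P : MvPolynomial (Fin (n + 1)) R) (b : ℕ) :
    l1 ((finSuccEquiv R n P).coeff b) ≤ l1 P := by
  classical
  rw [l1]
  simp only [finSuccEquiv_coeff_coeff]
  rw [← Finset.sum_image (f := fun A => ‖coeff A P‖)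
    (s := ((finSuccEquiv R n P).coeff b).support) (g := Finsupp.cons b)
    (Finsupp.cons_right_injective b).injOn]
  refine Finset.sum_le_sum_of_subset_of_nonneg ?_ fun _ _ _ => norm_nonneg _
  intro A hA
  obtain ⟨B, hB, rfl⟩ := Finset.mem_image.1 hA
  rw [mem_support_iff, finSuccEquiv_coeff_coeff] at hB
  exact mem_support_iff.2 hB

end MvPolynomial

theorem sum_max_zero_sub_ge {k r : ℕ} {θ : ℝ} (hk : 0 < k) (hkr : k ≤ r + 1) (hr : 0 < r)
    (h0 : 0 ≤ θ) (h1 : θ ≤ 1) :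
    k * θ ^ 2 / 8 ≤ ∑ l : Fin k, max 0 (θ - l / r) := by
  have hr' : (0 : ℝ) < r := by exact_mod_cast hr
  have hk' : (1 : ℝ) ≤ k := by exact_mod_cast hk
  have hkr' : (k : ℝ) ≤ 2 * r := by
    have : k ≤ 2 * r := by omega
    exact_mod_cast this
  rw [Fin.sum_univ_eq_sum_range fun l : ℕ => max 0 (θ - (l : ℝ) / r)]
  set c := ⌈k * θ / 4⌉₊
  have hck : c ≤ k := by
    refine Nat.ceil_le.2 ?_
    nlinarith
  have h2 : ∑ l ∈ Finset.range c, θ / 2 ≤ ∑ l ∈ Finset.range k, max 0 (θ - (l : ℝ) / r) := by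
    refine (Finset.sum_le_sum fun l hl => ?_).trans
      (Finset.sum_le_sum_of_subset_of_nonneg (Finset.range_mono hck)
        fun _ _ _ => le_max_left _ _)
    refine le_trans ?_ (le_max_right _ _)
    have hl' : (l : ℝ) < k * θ / 4 := Nat.lt_ceil.1 (Finset.mem_range.1 hl)
    have : (l : ℝ) / r ≤ θ / 2 := by
      rw [div_le_iff₀ hr']
      nlinarith
    linarith
  rw [Finset.sum_const, Finset.card_range, nsmul_eq_mul] at h2
  have hc : k * θ / 4 ≤ c := Nat.le_ceil _
  nlinarith

namespace MvPolynomial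

theorem exists_coeff_shift_ne_zero {σ : Type*} {P : MvPolynomial σ ℤ} (hP : P ≠ 0) (β : σ → ℚ) :
    ∃ I, coeff I (shift β P) ≠ 0 := by
  rw [← ne_zero_iff]
  intro h
  exact hP (shift_injective (Int.cast_injective (α := ℚ)) β (by rw [h, map_zero]))

theorem shift_map_intCast {σ : Type*} (P : MvPolynomial σ ℤ) (β : σ → ℚ) :
    shift β (map (Int.castRingHom ℚ) P) = shift β P := by
  induction P using MvPolynomial.induction_on with
  | C a => simp
  | add p q hp hq => simp only [map_add, hp, hq]
  | mul_X p i hp => rw [map_mul, map_mul, map_mul, hp]; simp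

theorem hasse_map {σ R S : Type*} [CommRing R] [CommRing S] (f : R →+* S) (P : MvPolynomial σ R)
    (I : σ →₀ ℕ) : hasse I (map f P) = map f (hasse I P) := by
  have : taylorHom σ S (map f P) = map (map f) (taylorHom σ R P) := by
    induction P using MvPolynomial.induction_on with
    | C a => simp
    | add p q hp hq => simp only [map_add, hp, hq]
    | mul_X p i hp => rw [map_mul, map_mul, map_mul, map_mul, hp]; simp
  rw [hasse_apply, this, coeff_map, hasse_apply]

theorem exists_coeff_slice {n : ℕ} {R : Type*} [CommRing R] (W : MvPolynomial (Fin (n + 1)) R)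
    (A : Fin n →₀ ℕ) :
    ∃ V : Polynomial R, ∀ a, V.coeff a = coeff (Finsupp.cons a A) W := by
  refine ⟨∑ a ∈ (finSuccEquiv R n W).support,
    Polynomial.monomial a (coeff (Finsupp.cons a A) W), fun a => ?_⟩
  simp only [Polynomial.finsetSum_coeff, Polynomial.coeff_monomial, Finset.sum_ite_eq']
  split_ifs with h
  · rfl
  · rw [← finSuccEquiv_coeff_coeff, Polynomial.notMem_support_iff.1 h, coeff_zero]

/-- A generalized Wronskian of `P` which factors as `V(X 0) * U(X 1, …, X n)`. -/
theorem exists_wronskian {n r : ℕ} {P : MvPolynomial (Fin (n + 1)) ℤ} (hP : P ≠ 0)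
    (hr : degreeOf 0 P ≤ r) :
    ∃ k, 0 < k ∧ k ≤ r + 1 ∧ ∃ (b : Fin k → ℕ) (I : Fin k → (Fin n →₀ ℕ)) (V : Polynomial ℚ)
      (U : MvPolynomial (Fin n) ℤ), (∀ j, ∑ i, I j i ≤ j) ∧ V ≠ 0 ∧ U ≠ 0 ∧
      U = (Matrix.of fun j i => hasse (I j) ((finSuccEquiv ℤ n P).coeff (b i))).det ∧
      map (Int.castRingHom ℚ)
        (Matrix.of fun l j : Fin k => hasse (Finsupp.cons (l : ℕ) (I j)) P).det =
        Polynomial.aeval (X 0 : MvPolynomial (Fin (n + 1)) ℚ) V *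
          rename Fin.succ (map (Int.castRingHom ℚ) U) := by
  have hr' : degreeOf 0 (map (Int.castRingHom ℚ) P) ≤ r := by
    refine le_trans ?_ hr
    rw [degreeOf_le_iff]
    exact fun m hm => monomial_le_degreeOf 0 (support_map_subset _ _ hm)
  obtain ⟨k, hk, b, ψ, φ, hψ, hφ, hcoeff, hsum⟩ := exists_separated_sum hr'
  have hφmap : ∀ i, φ i = map (Int.castRingHom ℚ) ((finSuccEquiv ℤ n P).coeff (b i)) := fun i => by
    ext A
    rw [hcoeff, coeff_map, coeff_map, finSuccEquiv_coeff_coeff]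
  obtain ⟨I, hI, hdet⟩ := exists_det_hasse_ne_zero hφ
  have hUmap : (Matrix.of fun l j => hasse (I l) (φ j)).det = map (Int.castRingHom ℚ)
      (Matrix.of fun j i => hasse (I j) ((finSuccEquiv ℤ n P).coeff (b i))).det := by
    rw [RingHom.map_det]
    congr 1
    ext1 j i
    simp [hφmap, hasse_map]
  refine ⟨k, Nat.pos_of_ne_zero ?_, hk, b, I,
    (Matrix.of fun (l i : Fin k) => Polynomial.hasseDeriv (l : ℕ) (ψ i)).det, _, hI,
    Polynomial.det_hasseDeriv_ne_zero hψ, ?_, rfl, ?_⟩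
  · rintro rfl
    rw [Finset.univ_eq_empty, Finset.sum_empty] at hsum
    exact hP (map_injective _ (Int.castRingHom ℚ).injective_int (by rw [hsum, map_zero]))
  · rintro h
    rw [hUmap, h, map_zero] at hdet
    exact hdet rfl
  · rw [← hUmap]
    have h1 : Polynomial.aeval (X 0 : MvPolynomial (Fin (n + 1)) ℚ)
        (Matrix.of fun (l i : Fin k) => Polynomial.hasseDeriv (l : ℕ) (ψ i)).det =
        (Matrix.of fun (l i : Fin k) => Polynomial.aeval (X 0 : MvPolynomial (Fin (n + 1)) ℚ)
          (Polynomial.hasseDeriv (l : ℕ) (ψ i))).det := AlgHom.map_det _ _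
    have h2 : rename Fin.succ (Matrix.of fun l j => hasse (I l) (φ j)).det =
        (Matrix.of fun i l => rename Fin.succ (hasse (I l) (φ i))).det := by
      rw [← Matrix.det_transpose, AlgHom.map_det]
      rfl
    rw [h1, h2, ← Matrix.det_mul, RingHom.map_det]
    congr 1
    ext1 l j
    simp only [RingHom.mapMatrix_apply, Matrix.map_apply, Matrix.of_apply, Matrix.mul_apply]
    rw [← hasse_map, hsum, map_sum]
    simp only [hasse_cons_separated]

theorem l1_det_hasse_le {σ : Type*} [Fintype σ] {k r₀ N : ℕ} {B : ℝ} (hk : k ≤ r₀ + 1)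
    (hr₀ : r₀ ≤ N) (hNB : (N : ℝ) ≤ B) (I : Fin k → Fin k → (σ →₀ ℕ))
    (P : Fin k → Fin k → MvPolynomial σ ℤ)
    (hdeg : ∀ i j, ∀ A ∈ (P i j).support, ∑ s, A s ≤ N) (hP : ∀ i j, l1 (P i j) ≤ exp B) :
    l1 (Matrix.of fun i j => hasse (I i j) (P i j)).det ≤ exp (3 * k * B) := by
  have h2 : (2 : ℝ) ^ N ≤ exp B := by
    calc (2 : ℝ) ^ N ≤ exp 1 ^ N := by
          gcongr
          linarith [add_one_le_exp (1 : ℝ)]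
      _ = exp N := by rw [← exp_nat_mul, mul_one]
      _ ≤ exp B := exp_le_exp.2 hNB
  have h1 : ∀ i j, l1 ((Matrix.of fun i j => hasse (I i j) (P i j)) i j) ≤ exp B * exp B := by
    intro i j
    refine (l1_hasse_le _ (hdeg i j)).trans ?_
    gcongr
    · exact l1_nonneg _
    · exact hP i j
  have hk2 : (k : ℝ) ≤ exp B := by
    refine le_trans ?_ h2
    have : k ≤ 2 ^ N :=
      calc k ≤ r₀ + 1 := hk
        _ ≤ N + 1 := by omega
        _ ≤ 2 ^ N := Nat.lt_two_pow_self
    exact_mod_cast this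
  refine (l1_det_le _ h1).trans ?_
  have h3 : (k.factorial : ℝ) ≤ exp B ^ k :=
    calc (k.factorial : ℝ) ≤ (k : ℝ) ^ k := by exact_mod_cast Nat.factorial_le_pow k
      _ ≤ _ := by gcongr
  calc (k.factorial : ℝ) * (exp B * exp B) ^ k ≤ exp B ^ k * (exp B * exp B) ^ k := by gcongr
    _ = exp (3 * k * B) := by
      rw [← mul_pow, ← exp_add, ← exp_add, ← exp_nat_mul]
      congr 1
      ring

/-- **Roth's lemma**: an integer polynomial of small height has small index at a
rational point whose coordinates have large and rapidly varying denominators. -/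
theorem roth_lemma (n : ℕ) : ∀ ε : ℝ, 0 < ε → ∃ ω : ℝ, 0 < ω ∧ ∀ (r : Fin n → ℕ) (p : Fin n → ℤ)
    (q : Fin n → ℕ) (B : ℝ) (P : MvPolynomial (Fin n) ℤ), P ≠ 0 → (∀ j, 0 < r j) →
    (∀ j, degreeOf j P ≤ r j) → (∀ i j, i < j → (r i : ℝ) ≤ ω * r j) → (∀ j, 0 < q j) →
    (∀ j, IsCoprime (p j) (q j : ℤ)) → (∑ j, (r j : ℝ)) ≤ B → l1 P ≤ exp B →
    (∀ j, B ≤ ω * (r j * log (q j))) →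
    ∃ I, coeff I (shift (fun j => (p j / q j : ℚ)) P) ≠ 0 ∧ ∑ j, I j * (r j : ℝ)⁻¹ ≤ ε := by
  induction n with
  | zero =>
    intro ε hε
    refine ⟨1, one_pos, fun r p q B P hP _ _ _ _ _ _ _ _ => ?_⟩
    obtain ⟨I, hI⟩ := exists_coeff_shift_ne_zero hP fun j => (p j / q j : ℚ)
    exact ⟨I, hI, by simpa using hε.le⟩
  | succ n ih =>
    intro ε' hε'
    obtain ⟨ε, hε, hε1, hεε'⟩ : ∃ ε : ℝ, 0 < ε ∧ ε ≤ 1 ∧ ε ≤ ε' :=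
      ⟨min 1 ε', lt_min one_pos hε', min_le_left _ _, min_le_right _ _⟩
    obtain ⟨ω', hω', IH⟩ := ih (ε ^ 2 / 128) (by positivity)
    refine ⟨min (ω' / 3) (ε ^ 2 / 384), by positivity, ?_⟩
    set ω := min (ω' / 3) (ε ^ 2 / 384)
    have hω : 0 < ω := by positivity
    have hω3 : 3 * ω ≤ ω' := by linarith [min_le_left (ω' / 3) (ε ^ 2 / 384)]
    have hωε : 3 * ω ≤ ε ^ 2 / 128 := by linarith [min_le_right (ω' / 3) (ε ^ 2 / 384)]
    have hωε2 : ω ≤ ε / 2 := by nlinarith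
    intro r p q B P hP hr hdeg hrat hq hpq hrB hPB hB
    obtain ⟨k, hk0, hkr, b, I, V, U, hI, hV, hU, hUdet, hW⟩ := exists_wronskian hP (hdeg 0)
    set W := (Matrix.of fun l j : Fin k => hasse (Finsupp.cons (l : ℕ) (I j)) P).det
    set β : Fin (n + 1) → ℚ := fun j => p j / q j
    have hk0' : (0 : ℝ) < k := by exact_mod_cast hk0
    have hrR : ∀ j, (0 : ℝ) < r j := fun j => by exact_mod_cast hr j
    have hsumpos : 0 < ∑ j, (r j : ℝ) := Finset.sum_pos (fun j _ => hrR j) Finset.univ_nonempty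
    have hBpos : 0 < B := hsumpos.trans_le hrB
    have hlog : ∀ j, 0 < log (q j) := fun j => by
      have := hBpos.trans_le (hB j)
      rw [mul_pos_iff_of_pos_left hω, mul_pos_iff_of_pos_left (hrR j)] at this
      exact this
    have hNB : ((∑ j, r j : ℕ) : ℝ) ≤ B := by exact_mod_cast hrB
    have hr0N : r 0 ≤ ∑ j, r j :=
      Finset.single_le_sum (fun _ _ => Nat.zero_le _) (Finset.mem_univ 0)
    have hWl1 : l1 W ≤ exp (3 * k * B) :=
      l1_det_hasse_le hkr hr0N hNB _ (fun _ _ => P)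
        (fun _ _ _ hA => sum_le_of_degreeOf_le hdeg hA) fun _ _ => hPB
    have hdegc : ∀ c j, degreeOf j ((finSuccEquiv ℤ n P).coeff c) ≤ r j.succ := fun c j =>
      (degreeOf_coeff_finSuccEquiv P j c).trans (hdeg _)
    have hUl1 : l1 U ≤ exp (3 * k * B) := by
      rw [hUdet]
      refine l1_det_hasse_le hkr hr0N hNB (fun j _ => I j) _ (fun _ i A hA => ?_)
        fun _ i => (l1_coeff_finSuccEquiv_le P _).trans hPB
      refine (sum_le_of_degreeOf_le (hdegc (b i)) hA).trans ?_
      rw [Fin.sum_univ_succ]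
      exact Nat.le_add_left _ _
    have hUdeg : ∀ j, degreeOf j U ≤ k * r j.succ := fun j => by
      rw [hUdet]
      exact degreeOf_det_le fun a c => (degreeOf_hasse_le _ _ _).trans (hdegc _ _)
    obtain ⟨J, hJ, hJw⟩ := IH (fun j => k * r j.succ) (fun j => p j.succ) (fun j => q j.succ)
      (3 * k * B) U hU (fun j => Nat.mul_pos hk0 (hr _)) hUdeg
      (fun i j hij => by
        have h1 := hrat i.succ j.succ (Fin.succ_lt_succ_iff.2 hij)
        have h2 : (r i.succ : ℝ) ≤ ω' * r j.succ := by nlinarith [hrR j.succ]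
        push_cast
        nlinarith)
      (fun j => hq _) (fun j => hpq _)
      (by
        have h1 : ∑ j : Fin n, (r j.succ : ℝ) ≤ B := by
          refine le_trans ?_ hrB
          rw [Fin.sum_univ_succ]
          exact le_add_of_nonneg_left (hrR 0).le
        push_cast
        rw [← Finset.mul_sum]
        nlinarith)
      hUl1
      (fun j => by
        have h1 := hB j.succ
        have h2 := mul_pos (hrR j.succ) (hlog j.succ)
        have h3 : 3 * B ≤ ω' * (r j.succ * log (q j.succ)) := by nlinarith
        push_cast
        nlinarith)
    obtain ⟨A, hA⟩ := ne_zero_iff.1 hU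
    obtain ⟨V', hV'⟩ := exists_coeff_slice W A
    have hVmap : V'.map (Int.castRingHom ℚ) = Polynomial.C ((coeff A U : ℤ) : ℚ) * V := by
      ext a
      have := congrArg (coeff (Finsupp.cons a A)) hW
      rw [coeff_map, coeff_cons_separated, coeff_map] at this
      rw [Polynomial.coeff_map, hV', this, Polynomial.coeff_C_mul, mul_comm]
      rfl
    have huQ : ((coeff A U : ℤ) : ℚ) ≠ 0 := by exact_mod_cast hA
    have hV'0 : V' ≠ 0 := by
      rintro rfl
      rw [Polynomial.map_zero] at hVmap
      exact mul_ne_zero (Polynomial.C_ne_zero.2 huQ) hV hVmap.symm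
    set v := V.rootMultiplicity (p 0 / q 0 : ℚ) with hv
    have hvv : (V'.map (Int.castRingHom ℚ)).rootMultiplicity (p 0 / q 0 : ℚ) = v := by
      rw [hVmap, Polynomial.rootMultiplicity_mul
        (mul_ne_zero (Polynomial.C_ne_zero.2 huQ) hV), Polynomial.rootMultiplicity_C, zero_add]
    have hvbound : (v : ℝ) * (r 0 : ℝ)⁻¹ ≤ 3 * k * ω := by
      have h1 := Polynomial.pow_rootMultiplicity_dvd_leadingCoeff (V := V') (hq 0) (hpq 0)
      rw [hvv] at h1
      have h2 := Int.le_of_dvd (abs_pos.2 (Polynomial.leadingCoeff_ne_zero.2 hV'0))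
        ((dvd_abs _ _).2 h1)
      have h3 : ((q 0 : ℝ)) ^ v ≤ exp (3 * k * B) := by
        refine le_trans ?_ ((norm_coeff_le_l1 W (Finsupp.cons V'.natDegree A)).trans hWl1)
        rw [← hV', Int.norm_eq_abs]
        exact_mod_cast h2
      have hq0 : (0 : ℝ) < q 0 := by exact_mod_cast hq 0
      have h4 : v * log (q 0) ≤ 3 * k * B := by
        have := log_le_log (by positivity) h3
        rwa [log_exp, log_pow] at this
      rw [← div_eq_mul_inv, div_le_iff₀ (hrR 0)]
      have h5 := hB 0
      have h6 : v * log (q 0) ≤ (3 * k * ω * r 0) * log (q 0) := by nlinarith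
      exact le_of_mul_le_mul_right h6 (hlog 0)
    have hVv : (Polynomial.taylor (β 0) V).coeff v ≠ 0 := by
      have h1 : v = (Polynomial.taylor (β 0) V).natTrailingDegree := by
        rw [hv, Polynomial.rootMultiplicity_eq_natTrailingDegree, Polynomial.taylor_apply]
      rw [h1]
      exact Polynomial.trailingCoeff_nonzero_iff_nonzero.2 (by simpa using hV)
    have hWne : coeff (Finsupp.cons v J) (shift β W) ≠ 0 := by
      rw [← shift_map_intCast, hW, shift_separated, coeff_cons_separated, shift_map_intCast]
      exact mul_ne_zero hVv hJ
    by_contra! hcon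
    have hge : WeightGE (fun j => (r j : ℝ)⁻¹) ε (shift β P) := fun D hD =>
      hεε'.trans (hcon D (mem_support_iff.1 hD)).le
    have hentry : ∀ l j : Fin k, WeightGE (fun j => (r j : ℝ)⁻¹)
        (max 0 (ε - ω - (l : ℝ) / r 0)) (shift β (hasse (Finsupp.cons (l : ℕ) (I j)) P)) := by
      intro l j D hD
      refine max_le (Finset.sum_nonneg fun i _ => by positivity) ?_
      rw [← hasse_shift] at hD
      refine le_trans ?_ (hge.hasse _ D hD)
      rw [Fin.sum_univ_succ]
      simp only [Finsupp.cons_zero, Finsupp.cons_succ]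
      have h1 : ∑ i : Fin n, (I j i : ℝ) * (r i.succ : ℝ)⁻¹ ≤ ω := by
        have h2 : ∀ i : Fin n, (I j i : ℝ) * (r i.succ : ℝ)⁻¹ ≤ I j i * (ω / r 0) := by
          intro i
          have := hrat 0 i.succ (Fin.succ_pos i)
          gcongr
          rw [inv_eq_one_div, div_le_div_iff₀ (hrR _) (hrR 0)]
          linarith
        refine (Finset.sum_le_sum fun i _ => h2 i).trans ?_
        rw [← Finset.sum_mul]
        have h3 : ∑ i, I j i ≤ r 0 := by
          have := hI j
          have := j.2
          omega
        have h4 : ∑ i, (I j i : ℝ) ≤ r 0 := by exact_mod_cast h3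
        calc _ ≤ (r 0 : ℝ) * (ω / r 0) := by gcongr
          _ = ω := mul_div_cancel₀ _ (hrR 0).ne'
      rw [div_eq_mul_inv]
      linarith
    have hWge : WeightGE (fun j => (r j : ℝ)⁻¹) (∑ l : Fin k, max 0 (ε - ω - (l : ℝ) / r 0))
        (shift β W) := by
      have : shift β W = (Matrix.of fun l j : Fin k =>
          shift β (hasse (Finsupp.cons (l : ℕ) (I j)) P)).det := AlgHom.map_det _ _
      rw [this]
      exact WeightGE.det hentry
    have h1 := hWge _ (mem_support_iff.2 hWne)
    have h2 := sum_max_zero_sub_ge (θ := ε - ω) hk0 hkr (hr 0) (by linarith) (by linarith)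
    rw [Fin.sum_univ_succ] at h1
    simp only [Finsupp.cons_zero, Finsupp.cons_succ] at h1
    have h3 : ∑ j : Fin n, (J j : ℝ) * (r j.succ : ℝ)⁻¹ ≤ k * (ε ^ 2 / 128) := by
      rw [← div_le_iff₀' hk0']
      refine le_trans (le_of_eq ?_) hJw
      rw [Finset.sum_div]
      refine Finset.sum_congr rfl fun j _ => ?_
      push_cast
      rw [mul_inv]
      ring
    have h4 : k * (ε / 2) ^ 2 / 8 ≤ k * (ε - ω) ^ 2 / 8 := by
      gcongr
      linarith
    nlinarith [mul_pos hk0' (pow_pos hε 2)]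

end MvPolynomial

/-- The powers of an algebraic integer are integer combinations of finitely many of them, with
coefficients of at most exponential growth. -/
theorem IsIntegral.exists_pow_eq_sum {φ : ℝ} (h : IsIntegral ℤ φ) :
    ∃ d : ℕ, 0 < d ∧ ∃ C : ℤ, 1 ≤ C ∧ ∀ s : ℕ, ∃ g : Fin d → ℤ,
      φ ^ s = ∑ i, (g i : ℝ) * φ ^ (i : ℕ) ∧ ∀ i, |g i| ≤ C ^ s := by
  obtain ⟨p, hp, hroot⟩ := h
  replace hroot : Polynomial.aeval φ p = 0 := by simpa [Polynomial.aeval_def] using hroot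
  have hd : 0 < p.natDegree := by
    refine Nat.pos_of_ne_zero fun h0 => ?_
    rw [Polynomial.eq_one_of_monic_natDegree_zero hp h0] at hroot
    simp at hroot
  set H : ℤ := ∑ i ∈ p.support, |p.coeff i|
  have hH0 : 0 ≤ H := Finset.sum_nonneg fun _ _ => abs_nonneg _
  have hH : ∀ i, |p.coeff i| ≤ H := fun i => by
    by_cases hi : i ∈ p.support
    · exact Finset.single_le_sum (f := fun i => |p.coeff i|) (fun _ _ => abs_nonneg _) hi
    · rw [Polynomial.notMem_support_iff.1 hi, abs_zero]; exact hH0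
  refine ⟨p.natDegree, hd, 1 + H, by linarith, fun s => ?_⟩
  suffices ∃ g : Polynomial ℤ, g.degree < p.natDegree ∧ Polynomial.aeval φ g = φ ^ s ∧
      ∀ i, |g.coeff i| ≤ (1 + H) ^ s by
    obtain ⟨g, hg, hgs, hgc⟩ := this
    refine ⟨fun i => g.coeff i, ?_, fun i => hgc i⟩
    have hg' : g.natDegree < p.natDegree := by
      rcases eq_or_ne g 0 with rfl | h0
      · simpa using hd
      · exact (Polynomial.natDegree_lt_iff_degree_lt h0).2 hg
    rw [← hgs, Polynomial.aeval_eq_sum_range' hg', ← Fin.sum_univ_eq_sum_range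
      (fun i => g.coeff i • φ ^ i)]
    simp
  induction s with
  | zero =>
    refine ⟨1, ?_, by simp, fun i => ?_⟩
    · rw [Polynomial.degree_one]
      exact_mod_cast hd
    · rw [Polynomial.coeff_one]
      split_ifs <;> simp
  | succ s ih =>
    obtain ⟨g, hg, hgs, hgc⟩ := ih
    refine ⟨Polynomial.X * g - Polynomial.C (g.coeff (p.natDegree - 1)) * p, ?_, ?_, ?_⟩
    · rw [Polynomial.degree_lt_iff_coeff_zero] at hg ⊢
      intro i hi
      obtain ⟨i, rfl⟩ := Nat.exists_eq_succ_of_ne_zero (show i ≠ 0 by omega)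
      rw [Polynomial.coeff_sub, Nat.succ_eq_add_one, Polynomial.coeff_X_mul,
        Polynomial.coeff_C_mul]
      rcases hi.eq_or_lt with h | h
      · rw [← Nat.succ_eq_add_one, ← h, hp.coeff_natDegree, h, Nat.succ_sub_one]
        ring
      · rw [Polynomial.coeff_eq_zero_of_natDegree_lt h, hg i (by omega)]
        ring
    · rw [map_sub, map_mul, map_mul, hroot, hgs, Polynomial.aeval_X, pow_succ]
      ring
    · intro i
      have h1 : |(Polynomial.X * g).coeff i| ≤ (1 + H) ^ s := by
        cases i with
        | zero => simp only [Polynomial.coeff_X_mul_zero, abs_zero]; positivity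
        | succ i => rw [Polynomial.coeff_X_mul]; exact hgc i
      rw [Polynomial.coeff_sub, Polynomial.coeff_C_mul]
      calc _ ≤ |(Polynomial.X * g).coeff i| + |g.coeff (p.natDegree - 1) * p.coeff i| :=
            abs_sub _ _
        _ ≤ (1 + H) ^ s + (1 + H) ^ s * H := by
            rw [abs_mul]
            gcongr
            · exact hgc _
            · exact hH i
        _ = (1 + H) ^ (s + 1) := by ring

theorem sum_exp_le {r : ℕ} (hr : 0 < r) (t l : ℝ) :
    ∑ i : Fin (r + 1), exp (l * (t - i / r)) ≤ (r + 1) * exp (l ^ 2 / 8 - l * (1 / 2 - t)) := by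
  have hr' : (0 : ℝ) < r := by exact_mod_cast hr
  have h1 : ∀ i : Fin (r + 1), exp (l * (t - i / r)) ≤
      exp (l * t) * (1 - (1 - exp (-l)) / r * i) := by
    intro i
    have hi : (i : ℝ) / r ≤ 1 := by
      rw [div_le_one hr']
      exact_mod_cast Nat.lt_succ_iff.1 i.2
    have := convexOn_exp.2 (Set.mem_univ 0) (Set.mem_univ (-l)) (sub_nonneg.2 hi)
      (show (0 : ℝ) ≤ i / r by positivity) (by ring)
    simp only [smul_eq_mul, mul_zero, zero_add, exp_zero, mul_one] at this
    calc exp (l * (t - i / r)) = exp (l * t) * exp (i / r * -l) := by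
          rw [← exp_add]; congr 1; ring
      _ ≤ exp (l * t) * (1 - i / r + i / r * exp (-l)) := by gcongr
      _ = _ := by ring
  have h2 : ∑ i : Fin (r + 1), (i : ℝ) = r * (r + 1) / 2 := by
    have := Finset.sum_range_id_mul_two (r + 1)
    rw [Fin.sum_univ_eq_sum_range (fun i => (i : ℝ)) (r + 1), eq_div_iff two_ne_zero]
    rw [Nat.add_sub_cancel] at this
    have h := congrArg (Nat.cast : ℕ → ℝ) this
    push_cast at h
    linarith
  have h3 : cosh (l / 2) ≤ exp (l ^ 2 / 8) := by
    refine (cosh_le_exp_half_sq _).trans_eq ?_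
    congr 1
    ring
  calc _ ≤ ∑ i : Fin (r + 1), exp (l * t) * (1 - (1 - exp (-l)) / r * i) :=
        Finset.sum_le_sum fun i _ => h1 i
    _ = exp (l * t) * ((r + 1) - (1 - exp (-l)) / r * ∑ i : Fin (r + 1), (i : ℝ)) := by
        rw [← Finset.mul_sum, Finset.sum_sub_distrib, Finset.mul_sum]
        simp
    _ = (r + 1) * (exp (l * t) * ((1 + exp (-l)) / 2)) := by
        rw [h2]
        field_simp
        ring
    _ = (r + 1) * (exp (-l * (1 / 2 - t)) * cosh (l / 2)) := by
        have e1 : exp (-l * (1 / 2 - t)) * exp (l / 2) = exp (l * t) := by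
          rw [← exp_add]; congr 1; ring
        have e2 : exp (-l * (1 / 2 - t)) * exp (-(l / 2)) = exp (l * t) * exp (-l) := by
          rw [← exp_add, ← exp_add]; congr 1; ring
        rw [cosh_eq]
        linear_combination -((r + 1) / 2 : ℝ) * (e1 + e2)
    _ ≤ (r + 1) * (exp (-l * (1 / 2 - t)) * exp (l ^ 2 / 8)) := by gcongr
    _ = _ := by
        rw [← exp_add]
        ring_nf

/-- A Hoeffding bound for the number of lattice points of small weight in a box. -/
theorem card_weight_lt_le {m : ℕ} {r : Fin m → ℕ} (hr : ∀ j, 0 < r j) {t : ℝ} (ht : t ≤ 1 / 2) :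
    (Fintype.card {I : ∀ j, Fin (r j + 1) // ∑ j, (I j : ℝ) * (r j : ℝ)⁻¹ < t * m} : ℝ) ≤
      exp (-2 * (1 / 2 - t) ^ 2) ^ m * ∏ j, ((r j : ℝ) + 1) := by
  classical
  set l := 4 * (1 / 2 - t) with hl
  have hl0 : 0 ≤ l := by linarith
  rw [Fintype.card_subtype, Finset.card_filter, Nat.cast_sum]
  calc _ ≤ ∑ I : ∀ j, Fin (r j + 1), ∏ j, exp (l * (t - I j / r j)) := by
        refine Finset.sum_le_sum fun I _ => ?_
        rw [← exp_sum]
        split_ifs with h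
        · rw [Nat.cast_one]
          refine one_le_exp ?_
          rw [← Finset.mul_sum, Finset.sum_sub_distrib]
          refine mul_nonneg hl0 ?_
          simp only [Finset.sum_const, Finset.card_univ, Fintype.card_fin, nsmul_eq_mul,
            div_eq_mul_inv]
          linarith
        · simpa using (exp_pos _).le
    _ = ∏ j, ∑ i : Fin (r j + 1), exp (l * (t - i / r j)) := by
        rw [Finset.prod_univ_sum, Fintype.piFinset_univ]
    _ ≤ ∏ j, ((r j + 1) * exp (-2 * (1 / 2 - t) ^ 2)) := by
        refine Finset.prod_le_prod (fun j _ => Finset.sum_nonneg fun _ _ => (exp_pos _).le)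
          fun j _ => (sum_exp_le (hr j) t l).trans_eq ?_
        congr 2
        rw [hl]
        ring
    _ = _ := by
        rw [Finset.prod_mul_distrib]
        simp [mul_comm]

/-- Up to a common denominator, the powers of an algebraic number are integer combinations of
finitely many real numbers, with coefficients of at most exponential growth. -/
theorem IsAlgebraic.exists_pow_mul_pow_eq_sum {θ : ℝ} (h : IsAlgebraic ℚ θ) :
    ∃ d : ℕ, 0 < d ∧ ∃ C : ℤ, 1 ≤ C ∧ ∃ a : ℤ, a ≠ 0 ∧ ∃ b : Fin d → ℝ, ∀ s R : ℕ, s ≤ R →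
      ∃ g : Fin d → ℤ, a ^ R * θ ^ s = ∑ i, (g i : ℝ) * b i ∧ ∀ i, |g i| ≤ C ^ R := by
  obtain ⟨a, ha, h_int⟩ := ((IsFractionRing.isAlgebraic_iff ℤ ℚ ℝ).2 h).exists_integral_multiple
  obtain ⟨d, hd, C, hC, H⟩ := h_int.exists_pow_eq_sum
  have ha1 : 1 ≤ |a| := Int.one_le_abs ha
  refine ⟨d, hd, |a| * C, one_le_mul_of_one_le_of_one_le ha1 hC, a, ha,
    fun i => (a • θ) ^ (i : ℕ), fun s R hs => ?_⟩
  obtain ⟨g, hg, hgC⟩ := H s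
  refine ⟨fun i => a ^ (R - s) * g i, ?_, fun i => ?_⟩
  · simp only [Int.cast_mul, mul_assoc]
    rw [← Finset.mul_sum, ← hg, zsmul_eq_mul, mul_pow, ← mul_assoc, Int.cast_pow, ← pow_add,
      Nat.sub_add_cancel hs]
  · rw [abs_mul, abs_pow, mul_pow]
    gcongr
    · omega
    · exact (hgC i).trans (pow_le_pow_right₀ hC hs)

namespace MvPolynomial

theorem coeff_shift_sum_monomial {m : ℕ} {ι : Type*} (s : Finset ι) (e : ι → Fin m →₀ ℕ)
    (t : ι → ℤ) (θ : ℝ) (I : Fin m →₀ ℕ) :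
    coeff I (shift (fun _ => θ) (∑ A ∈ s, monomial (e A) (t A))) =
      ∑ A ∈ s, (t A : ℝ) * ((∏ j, (e A j).choose (I j) : ℕ) * θ ^ ∑ j, (e A j - I j)) := by
  rw [coeff_shift, map_sum, map_sum]
  refine Finset.sum_congr rfl fun A _ => ?_
  rw [hasse_monomial, aeval_monomial, Finsupp.prod_fintype _ _ (by simp),
    ← Finset.prod_pow_eq_pow_sum]
  simp [mul_assoc]

open scoped Matrix.Norms.Elementwise in
/-- The auxiliary polynomial in Roth's theorem: an integer polynomial of small height and large
index at `(θ, …, θ)`. -/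
theorem exists_auxiliary {θ t : ℝ} (h : IsAlgebraic ℚ θ) (ht0 : 0 < t) (ht : t < 1 / 2) :
    ∃ m : ℕ, 0 < m ∧ ∃ C : ℝ, 1 ≤ C ∧ ∀ r : Fin m → ℕ, (∀ j, 0 < r j) →
      ∃ P : MvPolynomial (Fin m) ℤ, P ≠ 0 ∧ (∀ j, degreeOf j P ≤ r j) ∧
        l1 P ≤ C ^ (∑ j, r j) ∧ ∀ I : Fin m →₀ ℕ, ∑ j, (I j : ℝ) * (r j : ℝ)⁻¹ < t * m →
          coeff I (shift (fun _ => θ) P) = 0 := by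
  classical
  obtain ⟨d, hd, C, hC, a, ha, b, H⟩ := h.exists_pow_mul_pow_eq_sum
  have hd' : (0 : ℝ) < d := by exact_mod_cast hd
  obtain ⟨m, hm⟩ := exists_pow_lt_of_lt_one (show (0 : ℝ) < 1 / (2 * d) by positivity)
    (show exp (-2 * (1 / 2 - t) ^ 2) < 1 by
      rw [exp_lt_one_iff]
      nlinarith [pow_pos (sub_pos.2 ht) 2])
  have hm0 : 0 < m := by
    refine Nat.pos_of_ne_zero fun h0 => ?_
    rw [h0, pow_zero, lt_div_iff₀ (by positivity)] at hm
    have : (1 : ℝ) ≤ d := by exact_mod_cast hd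
    linarith
  have hCR : (1 : ℝ) ≤ C := by exact_mod_cast hC
  refine ⟨m, hm0, 8 * C, by linarith, fun r hr => ?_⟩
  set R := ∑ j, r j
  choose g hg hgC using fun s (hs : s ≤ R) => H s R hs
  let rows := {I : ∀ j, Fin (r j + 1) // ∑ j, (I j : ℝ) * (r j : ℝ)⁻¹ < t * m} × Fin d
  let cols := ∀ j, Fin (r j + 1)
  have hle : ∀ (A : cols) (I : Fin m → ℕ), ∑ j, ((A j : ℕ) - I j) ≤ R := fun A I =>
    Finset.sum_le_sum fun j _ => (Nat.sub_le _ _).trans (Nat.lt_succ_iff.1 (A j).2)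
  let M : Matrix rows cols ℤ := Matrix.of fun I A =>
    ((∏ j, (A j : ℕ).choose (I.1.1 j) : ℕ) : ℤ) * g _ (hle A fun j => I.1.1 j) I.2
  have hcols : (Fintype.card cols : ℝ) = ∏ j, ((r j : ℝ) + 1) := by
    rw [Fintype.card_pi]
    simp
  have hcols0 : (0 : ℝ) < Fintype.card cols := by
    rw [hcols]
    positivity
  have hcard : (Fintype.card rows : ℝ) * 2 < Fintype.card cols := by
    have h1 := card_weight_lt_le hr ht.le
    rw [← hcols] at h1
    rw [Fintype.card_prod, Fintype.card_fin, Nat.cast_mul]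
    rw [lt_div_iff₀ (by positivity)] at hm
    calc _ ≤ exp (-2 * (1 / 2 - t) ^ 2) ^ m * (Fintype.card cols : ℝ) * d * 2 := by gcongr
      _ = (exp (-2 * (1 / 2 - t) ^ 2) ^ m * (2 * d)) * (Fintype.card cols : ℝ) := by ring
      _ < 1 * (Fintype.card cols : ℝ) := by gcongr
      _ = _ := one_mul _
  have hrows0 : 0 < Fintype.card rows := by
    refine Fintype.card_pos_iff.2 ⟨⟨⟨fun j => 0, ?_⟩, ⟨0, hd⟩⟩⟩
    simp only [Fin.val_zero, Nat.cast_zero, zero_mul, Finset.sum_const_zero]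
    positivity
  have hlt : Fintype.card rows < Fintype.card cols := by
    have : (Fintype.card rows : ℝ) < Fintype.card cols := by
      linarith [(Nat.cast_nonneg (Fintype.card rows) : (0 : ℝ) ≤ _)]
    exact_mod_cast this
  have hcols2 : (Fintype.card cols : ℝ) ≤ 2 ^ R := by
    rw [hcols, ← Finset.prod_pow_eq_pow_sum]
    refine Finset.prod_le_prod (fun _ _ => by positivity) fun j _ => ?_
    have : r j + 1 ≤ 2 ^ r j := Nat.lt_two_pow_self
    exact_mod_cast this
  have hM : ∀ I A, ‖M I A‖ ≤ (2 * C : ℝ) ^ R := by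
    intro I A
    have h1 : ∏ j, (A j : ℕ).choose (I.1.1 j) ≤ 2 ^ R := by
      rw [← Finset.prod_pow_eq_pow_sum]
      exact Finset.prod_le_prod' fun j _ => (Nat.choose_le_two_pow _ _).trans
        (Nat.pow_le_pow_right two_pos (Nat.lt_succ_iff.1 (A j).2))
    have h2 : |(g _ (hle A fun j => I.1.1 j) I.2 : ℝ)| ≤ (C : ℝ) ^ R := by
      exact_mod_cast hgC _ (hle A fun j => I.1.1 j) I.2
    have h3 : ((∏ j, (A j : ℕ).choose (I.1.1 j) : ℕ) : ℝ) ≤ 2 ^ R := by exact_mod_cast h1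
    simp only [M, Matrix.of_apply]
    rw [norm_mul, Int.norm_eq_abs, Int.norm_eq_abs, mul_pow, Int.cast_natCast,
      Nat.abs_cast]
    gcongr
  obtain ⟨v, hv0, hMv, hv⟩ := Int.Matrix.exists_ne_zero_int_vec_norm_le M hlt hrows0
  replace hv : ‖v‖ ≤ (4 * C : ℝ) ^ R := by
    refine hv.trans ?_
    have h1 : max 1 ‖M‖ ≤ (2 * C : ℝ) ^ R := by
      refine max_le (one_le_pow₀ (by linarith)) ?_
      exact (Matrix.norm_le_iff (by positivity)).2 hM
    have h2 : (1 : ℝ) ≤ Fintype.card cols * max 1 ‖M‖ :=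
      one_le_mul_of_one_le_of_one_le (by exact_mod_cast (Nat.zero_lt_of_lt hlt)) (le_max_left _ _)
    calc _ ≤ (Fintype.card cols * max 1 ‖M‖) ^ (1 : ℝ) := by
          refine rpow_le_rpow_of_exponent_le h2 ?_
          rw [div_le_one] <;> linarith
      _ = Fintype.card cols * max 1 ‖M‖ := rpow_one _
      _ ≤ 2 ^ R * (2 * C : ℝ) ^ R := by gcongr
      _ = _ := by rw [← mul_pow]; ring
  let e : cols → Fin m →₀ ℕ := fun A => Finsupp.equivFunOnFinite.symm fun j => (A j : ℕ)
  have he : Function.Injective e := fun A B hAB => by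
    funext j
    exact Fin.ext (by simpa [e] using DFunLike.congr_fun hAB j)
  refine ⟨∑ A, monomial (e A) (v A), ?_, ?_, ?_, ?_⟩
  · obtain ⟨A, hA⟩ := Function.ne_iff.1 hv0
    refine fun h0 => hA ?_
    have := congrArg (coeff (e A)) h0
    rw [coeff_sum, Finset.sum_eq_single A (fun B _ hB => by
      rw [coeff_monomial, if_neg (he.ne hB)]) (by simp), coeff_monomial, if_pos rfl] at this
    simpa using this
  · intro j
    refine (degreeOf_sum_le _ _ _).trans (Finset.sup_le fun A _ => ?_)
    refine degreeOf_le_iff.2 fun B hB => ?_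
    rw [Finset.mem_singleton.1 (support_monomial_subset hB)]
    exact Nat.lt_succ_iff.1 (A j).2
  · refine (l1_sum_le _ _).trans ?_
    calc _ ≤ ∑ _A : cols, (4 * C : ℝ) ^ R := by
          refine Finset.sum_le_sum fun A _ => ?_
          rw [l1_monomial]
          exact (norm_le_pi_norm v A).trans hv
      _ = Fintype.card cols * (4 * C : ℝ) ^ R := by simp
      _ ≤ 2 ^ R * (4 * C : ℝ) ^ R := by gcongr
      _ = _ := by rw [← mul_pow]; ring
  · intro I hI
    rw [coeff_shift_sum_monomial]
    by_cases hbox : ∀ j, I j < r j + 1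
    · let J : {I : ∀ j, Fin (r j + 1) // ∑ j, (I j : ℝ) * (r j : ℝ)⁻¹ < t * m} :=
        ⟨fun j => ⟨I j, hbox j⟩, hI⟩
      have hsys : ∀ i, ∑ A : cols, (v A : ℝ) * ((∏ j, (A j : ℕ).choose (I j) : ℕ) *
          g _ (hle A fun j => I j) i) = 0 := by
        intro i
        have := congrFun hMv (J, i)
        simp only [Matrix.mulVec, dotProduct, Pi.zero_apply, M, Matrix.of_apply] at this
        have h2 := congrArg (Int.cast : ℤ → ℝ) this
        push_cast at h2 ⊢
        rw [← h2]
        exact Finset.sum_congr rfl fun A _ => mul_comm _ _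
      have haR : (a : ℝ) ^ R ≠ 0 := pow_ne_zero _ (Int.cast_ne_zero.2 ha)
      refine (mul_eq_zero.1 ?_).resolve_left haR
      calc _ = ∑ A : cols, (v A : ℝ) * ((∏ j, (A j : ℕ).choose (I j) : ℕ) *
            ∑ i, (g _ (hle A fun j => I j) i : ℝ) * b i) := by
            rw [Finset.mul_sum]
            refine Finset.sum_congr rfl fun A _ => ?_
            rw [← hg]
            simp only [e, Finsupp.equivFunOnFinite_symm_apply_apply]
            ring
        _ = ∑ i, (∑ A : cols, (v A : ℝ) * ((∏ j, (A j : ℕ).choose (I j) : ℕ) *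
            g _ (hle A fun j => I j) i)) * b i := by
            simp_rw [Finset.mul_sum, Finset.sum_mul]
            rw [Finset.sum_comm]
            simp only [mul_assoc]
        _ = 0 := Finset.sum_eq_zero fun i _ => by rw [hsys, zero_mul]
    · push Not at hbox
      obtain ⟨j, hj⟩ := hbox
      refine Finset.sum_eq_zero fun A _ => ?_
      rw [Finset.prod_eq_zero (Finset.mem_univ j) (Nat.choose_eq_zero_of_lt
        ((A j).2.trans_le hj))]
      simp

end MvPolynomial

namespace MvPolynomial

theorem l1_shift_le {m N : ℕ} (θ : ℝ) {P : MvPolynomial (Fin m) ℤ}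
    (h : ∀ A ∈ P.support, ∑ i, A i ≤ N) :
    l1 (shift (fun _ => θ) P) ≤ (1 + |θ|) ^ N * l1 P := by
  have hX : ∀ i : Fin m, l1 (X i + C θ : MvPolynomial (Fin m) ℝ) ≤ 1 + |θ| := fun i => by
    refine (l1_add_le _ _).trans ?_
    rw [X, C_apply, l1_monomial, l1_monomial, norm_one, Real.norm_eq_abs]
  have hpow : ∀ (i : Fin m) (k : ℕ), l1 ((X i + C θ) ^ k : MvPolynomial (Fin m) ℝ) ≤
      (1 + |θ|) ^ k := fun i k => by
    induction k with
    | zero => simp [l1_one]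
    | succ k ih =>
      rw [pow_succ, pow_succ]
      refine (l1_mul_le _ _).trans ?_
      gcongr
      · exact l1_nonneg _
      · exact hX i
  conv_lhs => rw [P.as_sum, map_sum]
  rw [l1.eq_def P, Finset.mul_sum]
  refine (l1_sum_le _ _).trans (Finset.sum_le_sum fun A hA => ?_)
  rw [shift, aeval_monomial, Finsupp.prod_fintype _ _ (by simp), mul_comm]
  refine (l1_mul_le _ _).trans ?_
  rw [algebraMap_apply, C_apply (a := algebraMap ℤ ℝ _), l1_monomial]
  gcongr
  · refine (l1_prod_le _ _).trans ?_
    calc _ ≤ ∏ i, (1 + |θ|) ^ A i :=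
          Finset.prod_le_prod (fun _ _ => l1_nonneg _) fun i _ => hpow i _
      _ = (1 + |θ|) ^ ∑ i, A i := Finset.prod_pow_eq_pow_sum _ _ _
      _ ≤ _ := pow_le_pow_right₀ (by linarith [abs_nonneg θ]) (h A hA)
  · simp [Int.norm_eq_abs]

theorem exists_int_eq_aeval_mul_prod {m : ℕ} {r : Fin m → ℕ} (β : Fin m → ℚ)
    {G : MvPolynomial (Fin m) ℤ} (h : ∀ j, degreeOf j G ≤ r j) :
    ∃ z : ℤ, aeval β G * ∏ j, ((β j).den : ℚ) ^ r j = z := by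
  refine ⟨∑ A ∈ G.support, coeff A G * ∏ j, (β j).num ^ A j * (β j).den ^ (r j - A j), ?_⟩
  conv_lhs => rw [G.as_sum, map_sum]
  rw [Finset.sum_mul, Int.cast_sum]
  refine Finset.sum_congr rfl fun A hA => ?_
  rw [aeval_monomial, Finsupp.prod_fintype _ _ (by simp), mul_assoc, ← Finset.prod_mul_distrib]
  push_cast
  congr 1
  refine Finset.prod_congr rfl fun j _ => ?_
  have hden : ((β j).den : ℚ) ≠ 0 := by exact_mod_cast (β j).den_nz
  have hle : A j ≤ r j := (monomial_le_degreeOf j hA).trans (h j)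
  rw [← Rat.mul_den_eq_num, mul_pow, mul_assoc, ← pow_add, Nat.add_sub_cancel' hle]

/-- The Liouville lower bound for a nonzero Hasse derivative at a rational point. -/
theorem inv_prod_le_abs_coeff_shift {m : ℕ} {r : Fin m → ℕ} (β : Fin m → ℚ)
    {P : MvPolynomial (Fin m) ℤ} (h : ∀ j, degreeOf j P ≤ r j) {I : Fin m →₀ ℕ}
    (hI : coeff I (shift β P) ≠ 0) :
    (∏ j, ((β j).den : ℝ) ^ r j)⁻¹ ≤ |coeff I (shift (fun j => (β j : ℝ)) P)| := by
  obtain ⟨z, hz⟩ := exists_int_eq_aeval_mul_prod β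
    (fun j => (degreeOf_hasse_le I P j).trans (h j))
  have h1 : coeff I (shift (fun j => (β j : ℝ)) P) = ((aeval β (hasse I P) : ℚ) : ℝ) := by
    rw [coeff_shift]
    exact aeval_algebraMap_apply ℝ β (hasse I P)
  rw [coeff_shift] at hI
  have hpos : (0 : ℚ) < ∏ j, ((β j).den : ℚ) ^ r j :=
    Finset.prod_pos fun j _ => pow_pos (by exact_mod_cast (β j).den_pos) _
  have hz0 : z ≠ 0 := fun h0 => mul_ne_zero hI hpos.ne' (by rw [hz, h0, Int.cast_zero])
  have hpos' : (0 : ℝ) < ∏ j, ((β j).den : ℝ) ^ r j := by exact_mod_cast hpos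
  have h2 : (z : ℝ) = coeff I (shift (fun j => (β j : ℝ)) P) * ∏ j, ((β j).den : ℝ) ^ r j := by
    rw [h1]
    exact_mod_cast hz.symm
  have h3 : (1 : ℝ) ≤ |(z : ℝ)| := by exact_mod_cast Int.one_le_abs hz0
  rw [h2, abs_mul, abs_of_pos hpos'] at h3
  rwa [inv_le_iff_one_le_mul₀ hpos']

/-- The Taylor upper bound for a Hasse derivative near a point of large index. -/
theorem abs_coeff_shift_le {m N : ℕ} {Q : MvPolynomial (Fin m) ℝ} {γ : Fin m → ℝ}
    {I : Fin m →₀ ℕ} {X : ℝ} (hX : 0 ≤ X) (hN : ∀ A ∈ Q.support, ∑ j, A j ≤ N)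
    (h : ∀ A ∈ Q.support, (∀ j, I j ≤ A j) → ∏ j, |γ j| ^ (A j - I j) ≤ X) :
    |coeff I (shift γ Q)| ≤ 2 ^ N * l1 Q * X := by
  rw [coeff_shift, hasse_eq_sum, map_sum, l1.eq_def, Finset.mul_sum, Finset.sum_mul]
  refine (Finset.abs_sum_le_sum_abs _ _).trans (Finset.sum_le_sum fun A hA => ?_)
  by_cases hAI : ∀ j, I j ≤ A j
  · rw [aeval_monomial, Finsupp.prod_fintype _ _ (by simp), Algebra.algebraMap_self_apply,
      abs_mul, abs_mul, Finset.abs_prod, Finset.abs_prod]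
    have h1 : ∏ j, |((A j).choose (I j) : ℝ)| ≤ 2 ^ N := by
      calc _ ≤ ∏ j, (2 : ℝ) ^ A j := by
            refine Finset.prod_le_prod (fun _ _ => abs_nonneg _) fun j _ => ?_
            rw [Nat.abs_cast]
            exact_mod_cast Nat.choose_le_two_pow _ _
        _ = 2 ^ ∑ j, A j := Finset.prod_pow_eq_pow_sum _ _ _
        _ ≤ _ := pow_le_pow_right₀ one_le_two (hN A hA)
    have h2 : ∏ j, |γ j ^ (A - I) j| ≤ X := by
      simpa only [abs_pow, Finsupp.tsub_apply] using h A hA hAI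
    rw [Real.norm_eq_abs, mul_comm |coeff A Q|]
    gcongr
  · push Not at hAI
    obtain ⟨j, hj⟩ := hAI
    rw [Finset.prod_eq_zero (Finset.mem_univ j) (by rw [Nat.choose_eq_zero_of_lt hj]; simp)]
    simp only [mul_zero, map_zero, abs_zero]
    positivity

end MvPolynomial

theorem exists_rapidly_decreasing {p : ℚ → Prop}
    (h : ∀ D : ℝ, ∃ x : ℚ, D < log x.den ∧ p x) {L κ : ℝ} (hL : 0 < L) (hκ : 0 < κ) (m : ℕ) :
    ∃ x : Fin m → ℚ, (∀ j, p (x j)) ∧ (∀ j, L ≤ log (x j).den) ∧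
      ∀ i j, i < j → κ * log (x j).den ≤ log (x i).den := by
  induction m with
  | zero => exact ⟨fun j => j.elim0, fun j => j.elim0, fun j => j.elim0, fun j => j.elim0⟩
  | succ m ih =>
    obtain ⟨x, hp, hx, hxx⟩ := ih
    obtain ⟨y, hy, hpy⟩ := h (L + κ * ∑ j, log (x j).den)
    have h0 : ∀ j, 0 ≤ log (x j).den := fun j => hL.le.trans (hx j)
    have hsum : 0 ≤ ∑ j, log (x j).den := Finset.sum_nonneg fun j _ => h0 j
    refine ⟨Fin.cons y x, fun j => ?_, fun j => ?_, fun i j hij => ?_⟩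
    · induction j using Fin.cases with
      | zero => simpa using hpy
      | succ j => simpa using hp j
    · induction j using Fin.cases with
      | zero =>
        rw [Fin.cons_zero]
        linarith [mul_nonneg hκ.le hsum]
      | succ j => simpa using hx j
    · induction j using Fin.cases with
      | zero => exact absurd hij (Fin.not_lt_zero i)
      | succ j =>
        induction i using Fin.cases with
        | zero =>
          rw [Fin.cons_zero, Fin.cons_succ]
          have := Finset.single_le_sum (f := fun j => log (x j).den) (fun j _ => h0 j)
            (Finset.mem_univ j)
          have := mul_le_mul_of_nonneg_left this hκ.le
          linarith
        | succ i => simpa using hxx i j (by simpa using hij)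

open MvPolynomial in
set_option maxHeartbeats 1000000 in
/-- A quantitative core of Roth's theorem: rational approximations of exponent `μ > 2` to an
algebraic number have bounded denominators. -/
theorem IsAlgebraic.exists_den_bound {θ μ : ℝ} (h : IsAlgebraic ℚ θ) (hμ : 2 < μ) :
    ∃ D : ℝ, ∀ x : ℚ, |(x : ℝ) - θ| < (x.den : ℝ) ^ (-μ) → log x.den ≤ D := by
  by_contra! hcon
  replace hcon : ∀ D : ℝ, ∃ x : ℚ, D < log x.den ∧ |(x : ℝ) - θ| < (x.den : ℝ) ^ (-μ) :=
    fun D => (hcon D).imp fun x hx => ⟨hx.2, hx.1⟩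
  have hμ0 : 0 < μ := by linarith
  set g := (μ - 2) / 4 with hg
  have hg0 : 0 < g := by linarith
  set t := (1 / μ + 1 / 2) / 2 with ht
  have hμt : μ * t = 1 + g := by
    rw [ht, hg]
    field_simp
    ring
  have ht0 : 0 < t := by positivity
  have ht2 : t < 1 / 2 := by
    have : 1 / μ < 1 / 2 := one_div_lt_one_div_of_lt two_pos hμ
    linarith
  obtain ⟨m, hm, C, hC, aux⟩ := exists_auxiliary h ht0 ht2
  have hm1 : (1 : ℝ) ≤ m := by exact_mod_cast hm
  set ε := g / (4 * μ) with hε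
  have hμε : μ * ε = g / 4 := by
    rw [hε]
    field_simp
  obtain ⟨ω₀, hω₀, roth⟩ := roth_lemma m ε (by positivity)
  set ω := min ω₀ 1
  have hω : 0 < ω := lt_min hω₀ one_pos
  have hω1 : ω ≤ 1 := min_le_right _ _
  have hωω : ω ≤ ω₀ := min_le_left _ _
  set K := 2 * ((1 + |θ|) * C) with hK
  have hθ1 : 1 ≤ 1 + |θ| := by linarith [abs_nonneg θ]
  have hCK : C ≤ K := by nlinarith
  have hK0 : 0 < K := by linarith
  have hlogK : 0 ≤ log K := log_nonneg (by linarith)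
  set C' := 1 + log K + 4 * log K / g with hC'
  have hC'1 : 1 ≤ C' := by
    have : 0 ≤ 4 * log K / g := by positivity
    linarith
  have hC'K : log K ≤ C' := by
    have : 0 ≤ 4 * log K / g := by positivity
    linarith
  have hC'g : log K ≤ g / 4 * C' := by
    have : g / 4 * C' = g / 4 * (1 + log K) + log K := by
      rw [hC']
      field_simp
    have : 0 ≤ g / 4 * (1 + log K) := by positivity
    linarith
  set L := 2 * C' * m / ω with hL
  have hL0 : 0 < L := by positivity
  obtain ⟨x, hx, hxL, hxx⟩ := exists_rapidly_decreasing hcon hL0 (κ := 2 / ω) (by positivity) m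
  set l : Fin m → ℝ := fun j => log (x j).den
  have hl : ∀ j, 0 < l j := fun j => hL0.trans_le (hxL j)
  set ε' := min (g / 4) 1
  have hε' : 0 < ε' := lt_min (by positivity) one_pos
  set Λ := (∑ j, l j) / ε' with hΛ
  have hlΛ : ∀ j, l j ≤ ε' * Λ := fun j => by
    rw [hΛ, mul_div_cancel₀ _ hε'.ne']
    exact Finset.single_le_sum (f := l) (fun j _ => (hl j).le) (Finset.mem_univ j)
  have hΛ0 : 0 < Λ :=
    pos_of_mul_pos_right ((hl ⟨0, hm⟩).trans_le (hlΛ ⟨0, hm⟩)) hε'.le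
  set r : Fin m → ℕ := fun j => ⌈Λ / l j⌉₊
  have hr : ∀ j, 0 < r j := fun j => Nat.ceil_pos.2 (div_pos hΛ0 (hl j))
  have hr' : ∀ j, (0 : ℝ) < r j := fun j => by exact_mod_cast hr j
  have hrl : ∀ j, Λ ≤ r j * l j := fun j => (div_le_iff₀ (hl j)).1 (Nat.le_ceil _)
  have hru : ∀ j, r j * l j ≤ (1 + ε') * Λ := fun j => by
    have h1 := (Nat.ceil_lt_add_one (div_pos hΛ0 (hl j)).le).le
    calc r j * l j ≤ (Λ / l j + 1) * l j := by
          gcongr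
      _ = Λ + l j := by rw [add_mul, div_mul_cancel₀ _ (hl j).ne', one_mul]
      _ ≤ _ := by linarith [hlΛ j]
  have hru2 : ∀ j, r j * l j ≤ 2 * Λ := fun j => (hru j).trans (by
    gcongr
    linarith [min_le_right (g / 4) 1])
  set R := ∑ j, r j
  set B := C' * R with hB
  have hBΛ : B ≤ ω * Λ := by
    have h1 : (R : ℝ) * L ≤ m * (2 * Λ) := by
      calc (R : ℝ) * L = ∑ j, r j * L := by rw [Nat.cast_sum, Finset.sum_mul]
        _ ≤ ∑ j : Fin m, 2 * Λ := Finset.sum_le_sum fun j _ => by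
            refine le_trans ?_ (hru2 j)
            gcongr
            exact hxL j
        _ = _ := by simp
    have h2 : (R : ℝ) * L = B * (2 * m / ω) := by rw [hB, hL]; ring
    have h3 : (m : ℝ) * (2 * Λ) = ω * Λ * (2 * m / ω) := by field_simp
    rw [h2, h3] at h1
    exact le_of_mul_le_mul_right h1 (by positivity)
  obtain ⟨P, hP0, hPdeg, hPl1, hPind⟩ := aux r hr
  have hR0 : (0 : ℝ) ≤ R := Nat.cast_nonneg _
  obtain ⟨I, hI, hIw⟩ := roth r (fun j => (x j).num) (fun j => (x j).den) B P hP0 hr hPdeg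
    (fun i j hij => by
      have h1 : 2 * l j ≤ ω * l i := by
        have := hxx i j hij
        rw [div_mul_eq_mul_div, div_le_iff₀ hω] at this
        linarith
      have h2 : r i * l i ≤ ω * r j * l i := by
        calc r i * l i ≤ 2 * Λ := hru2 i
          _ ≤ 2 * (r j * l j) := by linarith [hrl j]
          _ = r j * (2 * l j) := by ring
          _ ≤ r j * (ω * l i) := by gcongr
          _ = _ := by ring
      exact (le_of_mul_le_mul_right h2 (hl i)).trans (by gcongr))
    (fun j => (x j).den_pos) (fun j => Rat.isCoprime_num_den (x j))
    (by
      rw [hB, ← Nat.cast_sum]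
      exact le_mul_of_one_le_left hR0 hC'1)
    (by
      refine hPl1.trans ?_
      rw [hB, mul_comm, exp_nat_mul]
      have : C ≤ exp C' := hCK.trans (by rw [← log_le_iff_le_exp hK0]; exact hC'K)
      gcongr)
    (fun j => by
      have h1 := hrl j
      have h2 : (0 : ℝ) ≤ r j * l j := hΛ0.le.trans h1
      calc B ≤ ω * Λ := hBΛ
        _ ≤ ω * (r j * l j) := by gcongr
        _ ≤ ω₀ * (r j * l j) := by gcongr)
  simp only [Rat.num_div_den] at hI
  have hlow := inv_prod_le_abs_coeff_shift x hPdeg hI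
  set Q : MvPolynomial (Fin m) ℝ := shift (fun _ => θ) P
  have hPR : ∀ A ∈ P.support, ∑ j, A j ≤ R := fun A hA => sum_le_of_degreeOf_le hPdeg hA
  have hQR : ∀ A ∈ Q.support, ∑ j, A j ≤ R := by
    intro A hA
    rw [mem_support_iff, coeff_shift] at hA
    have : hasse A P ≠ 0 := fun h0 => hA (by rw [h0, map_zero])
    obtain ⟨D, hD⟩ := support_nonempty.2 this
    refine le_trans ?_ (hPR _ (exists_of_mem_support_hasse hD))
    exact Finset.sum_le_sum fun j _ => by simp
  have hshift : shift (fun j => (x j : ℝ)) P = shift (fun j => (x j : ℝ) - θ) Q := by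
    have : ((fun _ => θ) + fun j => (x j : ℝ) - θ) = fun j => (x j : ℝ) := by
      funext j
      simp
    rw [shift_shift, this]
  have hup : |coeff I (shift (fun j => (x j : ℝ) - θ) Q)| ≤
      2 ^ R * l1 Q * exp (-(μ * Λ * (t * m - ε))) := by
    refine abs_coeff_shift_le (exp_pos _).le hQR fun A hA hAI => ?_
    have hAw : t * m ≤ ∑ j, (A j : ℝ) * (r j : ℝ)⁻¹ := by
      by_contra! hlt
      exact (mem_support_iff.1 hA) (hPind A hlt)
    calc ∏ j, |(x j : ℝ) - θ| ^ (A j - I j) ≤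
          ∏ j, exp (-(μ * Λ * ((A j : ℝ) * (r j : ℝ)⁻¹ - I j * (r j : ℝ)⁻¹))) := by
          refine Finset.prod_le_prod (fun j _ => by positivity) fun j _ => ?_
          have h1 : |(x j : ℝ) - θ| ≤ exp (-(μ * Λ * (r j : ℝ)⁻¹)) := by
            refine (hx j).le.trans ?_
            rw [rpow_def_of_pos (by exact_mod_cast (x j).den_pos)]
            refine exp_le_exp.2 ?_
            have : Λ * (r j : ℝ)⁻¹ ≤ l j := by
              rw [← div_eq_mul_inv, div_le_iff₀ (hr' j), mul_comm]
              exact hrl j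
            have := mul_le_mul_of_nonneg_left this hμ0.le
            linarith
          calc |(x j : ℝ) - θ| ^ (A j - I j) ≤ exp (-(μ * Λ * (r j : ℝ)⁻¹)) ^ (A j - I j) := by
                gcongr
            _ = _ := by
                rw [← exp_nat_mul, Nat.cast_sub (hAI j)]
                congr 1
                ring
      _ = exp (-(μ * Λ * (∑ j, (A j : ℝ) * (r j : ℝ)⁻¹ - ∑ j, I j * (r j : ℝ)⁻¹))) := by
          rw [← exp_sum, Finset.sum_neg_distrib, ← Finset.mul_sum, Finset.sum_sub_distrib]
      _ ≤ _ := by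
          gcongr
  have hQl1 : 2 ^ R * l1 Q ≤ exp (g / 4 * Λ) := by
    calc 2 ^ R * l1 Q ≤ 2 ^ R * ((1 + |θ|) ^ R * C ^ R) := by
          gcongr
          refine (l1_shift_le θ hPR).trans ?_
          gcongr
      _ = exp (R * log K) := by
          rw [← mul_pow, ← mul_pow, exp_nat_mul, exp_log hK0]
      _ ≤ _ := by
          refine exp_le_exp.2 ?_
          calc R * log K ≤ R * (g / 4 * C') := by gcongr
            _ = g / 4 * B := by rw [hB]; ring
            _ ≤ g / 4 * Λ := by
                gcongr
                exact hBΛ.trans (mul_le_of_le_one_left hΛ0.le hω1)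
  have hlow2 : exp (-(m * ((1 + ε') * Λ))) ≤ (∏ j, ((x j).den : ℝ) ^ r j)⁻¹ := by
    rw [exp_neg]
    have hden : ∀ j, (0 : ℝ) < (x j).den := fun j => by exact_mod_cast (x j).den_pos
    refine inv_anti₀ (Finset.prod_pos fun j _ => pow_pos (hden j) _) ?_
    calc _ = ∏ j, exp (r j * l j) := Finset.prod_congr rfl fun j _ => by
          rw [exp_nat_mul, exp_log (hden j)]
      _ = exp (∑ j, r j * l j) := (exp_sum _ _).symm
      _ ≤ _ := by
          refine exp_le_exp.2 ((Finset.sum_le_sum fun j _ => hru j).trans_eq ?_)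
          simp
  rw [hshift] at hlow
  have hfin := (hlow2.trans hlow).trans hup
  have hfin2 : exp (-(m * ((1 + ε') * Λ))) ≤
      exp (g / 4 * Λ) * exp (-(μ * Λ * (t * m - ε))) := hfin.trans (by gcongr)
  rw [← exp_add, exp_le_exp] at hfin2
  have e1 : μ * Λ * (t * m - ε) = Λ * ((1 + g) * m - g / 4) := by
    rw [← hμt, ← hμε]
    ring
  rw [e1] at hfin2
  have h5 : Λ * ((1 + g) * m - g / 4) ≤ Λ * (g / 4 + m * (1 + ε')) := by linarith
  have h6 := le_of_mul_le_mul_left h5 hΛ0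
  have h7 : m * ε' ≤ m * (g / 4) := by
    gcongr
    exact min_le_left _ _
  nlinarith

/-- **Roth's theorem**: an irrational algebraic number has irrationality measure `2`. -/
theorem IsAlgebraic.exists_roth_bound {θ μ : ℝ} (h : IsAlgebraic ℚ θ) (hirr : Irrational θ)
    (hμ : 2 < μ) :
    ∃ c : ℝ, 0 < c ∧ ∀ (q : ℕ) (p : ℤ), 0 < q → c * (q : ℝ) ^ (1 - μ) ≤ |q * θ - p| := by
  obtain ⟨D, hD⟩ := h.exists_den_bound hμ
  obtain ⟨δ, hδ0, hδ⟩ : ∃ δ : ℝ, 0 < δ ∧ ∀ b ∈ Finset.Icc 1 ⌊exp D⌋₊,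
      δ < |b * θ - round (b * θ)| := by
    have hev : ∀ᶠ δ : ℝ in nhdsWithin 0 (Set.Ioi 0), ∀ b ∈ Finset.Icc 1 ⌊exp D⌋₊,
        δ < |b * θ - round (b * θ)| := by
      refine (eventually_all_finset _).2 fun b hb => ?_
      have hb0 : b ≠ 0 := (Nat.one_le_iff_ne_zero).1 (Finset.mem_Icc.1 hb).1
      have hpos := abs_pos.2 (sub_ne_zero.2 ((hirr.natCast_mul hb0).ne_int (round (b * θ))))
      filter_upwards [Ioo_mem_nhdsGT hpos] with δ hδ using hδ.2
    exact ((eventually_mem_of_tendsto_nhdsWithin tendsto_id).and hev).exists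
  refine ⟨min δ 1, lt_min hδ0 one_pos, fun q p hq => ?_⟩
  set x : ℚ := p / q with hx
  have hq' : (0 : ℝ) < q := by exact_mod_cast hq
  have hq1 : (1 : ℝ) ≤ q := by exact_mod_cast hq
  have hden : (0 : ℝ) < x.den := by exact_mod_cast x.den_pos
  have hdq : (x.den : ℝ) ≤ q := by
    have h1 : (x.den : ℤ) ∣ q := by
      have := Rat.den_dvd p q
      rwa [Rat.divInt_eq_div] at this
    exact_mod_cast Nat.le_of_dvd hq (Int.natCast_dvd_natCast.1 h1)
  have hxR : (x : ℝ) = p / q := by rw [hx]; push_cast; rfl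
  have e1 : |q * θ - p| = q * |(x : ℝ) - θ| := by
    rw [abs_sub_comm, ← abs_of_pos hq', ← abs_mul, abs_of_pos hq', hxR, mul_sub,
      mul_div_cancel₀ _ hq'.ne']
  rw [e1]
  rcases le_or_gt (log x.den) D with hle | hlt
  · have hmem : x.den ∈ Finset.Icc 1 ⌊exp D⌋₊ :=
      Finset.mem_Icc.2 ⟨x.den_pos, Nat.le_floor ((log_le_iff_le_exp hden).1 hle)⟩
    have e2 : (x.den : ℝ) * |(x : ℝ) - θ| = |x.den * θ - x.num| := by
      rw [abs_sub_comm, ← abs_of_pos hden, ← abs_mul, abs_of_pos hden, mul_sub]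
      congr 2
      rw [mul_comm]
      exact_mod_cast Rat.mul_den_eq_num x
    calc min δ 1 * (q : ℝ) ^ (1 - μ) ≤ δ * 1 := by
          gcongr
          · exact min_le_left _ _
          · exact rpow_le_one_of_one_le_of_nonpos hq1 (by linarith)
      _ ≤ |x.den * θ - round (x.den * θ)| := by rw [mul_one]; exact (hδ _ hmem).le
      _ ≤ |x.den * θ - x.num| := round_le _ _
      _ = x.den * |(x : ℝ) - θ| := e2.symm
      _ ≤ _ := by gcongr
  · have hge : (x.den : ℝ) ^ (-μ) ≤ |(x : ℝ) - θ| := by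
      by_contra! hcon
      exact hlt.not_ge (hD x hcon)
    calc min δ 1 * (q : ℝ) ^ (1 - μ) ≤ 1 * (q : ℝ) ^ (1 - μ) := by
          gcongr
          exact min_le_right _ _
      _ = q * (q : ℝ) ^ (-μ) := by
          rw [one_mul, sub_eq_add_neg, rpow_add hq', rpow_one]
      _ ≤ q * (x.den : ℝ) ^ (-μ) := by
          refine mul_le_mul_of_nonneg_left ?_ hq'.le
          exact rpow_le_rpow_of_nonpos hden hdq (by linarith)
      _ ≤ _ := by gcongr

theorem summable_of_dyadic_le {f : ℕ → ℝ} (hf : ∀ n, 0 ≤ f n) {K ρ : ℝ} (hρ0 : 0 ≤ ρ)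
    (hρ : ρ < 1) (h : ∀ k, ∑ n ∈ Finset.Ico (2 ^ k) (2 ^ (k + 1)), f n ≤ K * ρ ^ k) :
    Summable f := by
  have h2 : ∀ k, ∑ n ∈ Finset.range (2 ^ k), f n ≤ f 0 + ∑ j ∈ Finset.range k, K * ρ ^ j := by
    intro k
    induction k with
    | zero => simp
    | succ k ih =>
      rw [Finset.sum_range_succ, ← Finset.sum_range_add_sum_Ico f
        (Nat.pow_le_pow_right two_pos k.le_succ)]
      linarith [h k]
  have hs : Summable fun j => K * ρ ^ j := (summable_geometric_of_lt_one hρ0 hρ).mul_left K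
  have hK : ∀ j, 0 ≤ K * ρ ^ j := fun j =>
    (Finset.sum_nonneg fun n _ => hf n).trans (h j)
  refine summable_of_sum_range_le (c := f 0 + ∑' j, K * ρ ^ j) hf fun n => ?_
  calc _ ≤ ∑ i ∈ Finset.range (2 ^ n), f i :=
        Finset.sum_le_sum_of_subset_of_nonneg
          (Finset.range_mono Nat.lt_two_pow_self.le) fun i _ _ => hf i
    _ ≤ f 0 + ∑ j ∈ Finset.range n, K * ρ ^ j := h2 n
    _ ≤ _ := by
        gcongr
        exact hs.sum_le_tsum _ fun j _ => hK j

theorem abs_cos_pi_mul_pow_le (x : ℝ) (n : ℕ) :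
    |cos (π * x)| ^ n ≤ exp (-(2 * n * (x - round x) ^ 2)) := by
  set y := x - round x with hy
  have hcos : |cos (π * x)| = |cos (π * y)| := by
    rw [hy, mul_sub, mul_comm π (round x : ℝ), cos_sub_int_mul_pi, abs_mul, abs_zpow, abs_neg,
      abs_one, one_zpow, one_mul]
  have hy2 : |y| ≤ 1 / 2 := abs_sub_round x
  have hsin : 2 * |y| ≤ |sin (π * y)| := by
    have h1 := mul_le_sin (x := π * |y|) (by positivity) (by nlinarith [pi_pos])
    have h2 : 2 / π * (π * |y|) = 2 * |y| := by field_simp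
    rw [h2] at h1
    refine h1.trans ?_
    rcases abs_cases y with ⟨h, _⟩ | ⟨h, _⟩
    · rw [h]
      exact le_abs_self _
    · rw [h, mul_neg, sin_neg]
      exact neg_le_abs _
  have hsin2 : 4 * y ^ 2 ≤ sin (π * y) ^ 2 := by
    rw [← sq_abs (sin _), ← sq_abs y]
    nlinarith [abs_nonneg y]
  have hc2 : |cos (π * y)| ≤ exp (-(2 * y ^ 2)) := by
    refine abs_le_of_sq_le_sq ?_ (exp_pos _).le
    rw [cos_sq', ← exp_nat_mul]
    have := add_one_le_exp (-(4 * y ^ 2))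
    refine le_trans (by linarith) (this.trans_eq ?_)
    congr 1
    push_cast
    ring
  calc |cos (π * x)| ^ n ≤ exp (-(2 * y ^ 2)) ^ n := by rw [hcos]; gcongr
    _ = _ := by
        rw [← exp_nat_mul]
        congr 1
        ring

theorem card_abs_le_of_separated {ι : Type*} (S : Finset ι) (y : ι → ℝ) {s D : ℝ} (hs : 0 < s)
    (hD : 0 ≤ D) (hy : ∀ i ∈ S, |y i| ≤ D)
    (hsep : ∀ i ∈ S, ∀ j ∈ S, i ≠ j → s ≤ |y i - y j|) : (S.card : ℝ) ≤ 2 * D / s + 2 := by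
  have hDs : 0 ≤ D / s := by positivity
  have hcard : S.card ≤ (Finset.Icc ⌊-(D / s)⌋ ⌊D / s⌋).card := by
    refine Finset.card_le_card_of_injOn (fun i => ⌊y i / s⌋) (fun i hi => ?_)
      fun i hi j hj hij => ?_
    · have := abs_le.1 (hy i hi)
      refine Finset.mem_coe.2 (Finset.mem_Icc.2 ⟨Int.floor_le_floor ?_, Int.floor_le_floor ?_⟩)
      · rw [← neg_div]
        exact div_le_div_of_nonneg_right this.1 hs.le
      · exact div_le_div_of_nonneg_right this.2 hs.le
    · by_contra hne
      have h1 := Int.abs_sub_lt_one_of_floor_eq_floor hij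
      rw [← sub_div, abs_div, abs_of_pos hs, div_lt_one hs] at h1
      exact h1.not_ge (hsep i hi j hj hne)
  have hle : ⌊-(D / s)⌋ ≤ ⌊D / s⌋ + 1 :=
    (Int.floor_le_floor ((neg_nonpos.2 hDs).trans hDs)).trans (by omega)
  rw [Int.card_Icc] at hcard
  have h2 : (S.card : ℤ) ≤ ⌊D / s⌋ + 1 - ⌊-(D / s)⌋ := by omega
  have h3 : (S.card : ℝ) ≤ ⌊D / s⌋ + 1 - ⌊-(D / s)⌋ := by exact_mod_cast h2
  have h4 := Int.floor_le (D / s)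
  have h5 := Int.lt_floor_add_one (-(D / s))
  rw [mul_div_assoc]
  linarith

theorem mul_exp_neg_rpow_le {a : ℝ} (ha : 0 < a) {N : ℝ} (hN : 1 ≤ N) :
    N * exp (-(2 * N ^ a)) ≤ (⌈1 / a⌉₊.factorial : ℝ) := by
  have hN0 : 0 < N := by linarith
  set k := ⌈1 / a⌉₊
  have h1 : N ≤ (N ^ a) ^ k := by
    rw [← rpow_natCast, ← rpow_mul hN0.le]
    calc N = N ^ (1 : ℝ) := (rpow_one N).symm
      _ ≤ _ := by
        refine rpow_le_rpow_of_exponent_le hN ?_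
        have := Nat.le_ceil (1 / a)
        rwa [div_le_iff₀ ha, mul_comm] at this
  have hNa : 0 ≤ N ^ a := by positivity
  have h2 := pow_div_factorial_le_exp (N ^ a) hNa k
  rw [div_le_iff₀ (by positivity)] at h2
  calc N * exp (-(2 * N ^ a)) ≤ (exp (N ^ a) * k.factorial) * exp (-(N ^ a)) := by
        gcongr
        · exact h1.trans h2
        · linarith
    _ = k.factorial := by
        rw [mul_right_comm, ← exp_add, add_neg_cancel, exp_zero, one_mul]

theorem sum_abs_cos_pow_le {θ γ δ c : ℝ} (hδ : 0 < δ) (hc : 0 < c)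
    (h : ∀ (q : ℕ) (p : ℤ), 0 < q → c * (q : ℝ) ^ (-1 - δ) ≤ |q * θ - p|) {N : ℕ} (hN : 0 < N) :
    ∑ n ∈ Finset.Ico N (2 * N), |cos (π * (n * θ - γ))| ^ n ≤
      (2 / c + 2 + (⌈1 / (2 * δ)⌉₊.factorial : ℝ)) * (N : ℝ) ^ (1 / 2 + 2 * δ) := by
  have hN1 : (1 : ℝ) ≤ N := by exact_mod_cast hN
  have hN0 : (0 : ℝ) < N := by linarith
  set y : ℕ → ℝ := fun n => (n * θ - γ) - round (n * θ - γ)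
  set D := (N : ℝ) ^ (-(1 / 2) + δ) with hD
  set s := c * (N : ℝ) ^ (-1 - δ) with hs
  have hD0 : 0 < D := by positivity
  have hs0 : 0 < s := by positivity
  have hsep : ∀ i ∈ Finset.Ico N (2 * N), ∀ j ∈ Finset.Ico N (2 * N), i < j →
      s ≤ |y j - y i| := by
    intro i hi j hj hij
    rw [Finset.mem_Ico] at hi hj
    have h1 := h (j - i) (round (j * θ - γ) - round (i * θ - γ)) (by omega)
    have h2 : y j - y i = (j - i : ℕ) * θ -
        (round (j * θ - γ) - round (i * θ - γ) : ℤ) := by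
      simp only [y]
      rw [Nat.cast_sub hij.le]
      push_cast
      ring
    rw [h2]
    refine le_trans ?_ h1
    refine mul_le_mul_of_nonneg_left ?_ hc.le
    refine rpow_le_rpow_of_nonpos ?_ ?_ (by linarith)
    · exact_mod_cast (by omega : 0 < j - i)
    · exact_mod_cast (by omega : j - i ≤ N)
  have hsep' : ∀ i ∈ Finset.Ico N (2 * N), ∀ j ∈ Finset.Ico N (2 * N), i ≠ j →
      s ≤ |y i - y j| := by
    intro i hi j hj hij
    rcases hij.lt_or_gt with hlt | hgt
    · rw [abs_sub_comm]
      exact hsep i hi j hj hlt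
    · exact hsep j hj i hi hgt
  have hcard : (((Finset.Ico N (2 * N)).filter fun n => |y n| ≤ D).card : ℝ) ≤
      2 * D / s + 2 :=
    card_abs_le_of_separated _ y hs0 hD0.le (fun i hi => (Finset.mem_filter.1 hi).2)
      fun i hi j hj => hsep' i (Finset.mem_filter.1 hi).1 j (Finset.mem_filter.1 hj).1
  have hDs : 2 * D / s = 2 / c * (N : ℝ) ^ (1 / 2 + 2 * δ) := by
    rw [hD, hs, mul_div_mul_comm, ← rpow_sub hN0]
    congr 2
    ring
  have hterm : ∀ n ∈ Finset.Ico N (2 * N), |cos (π * (n * θ - γ))| ^ n ≤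
      (if |y n| ≤ D then 1 else 0) + exp (-(2 * (N : ℝ) ^ (2 * δ))) := by
    intro n hn
    split_ifs with hy
    · have : |cos (π * (n * θ - γ))| ^ n ≤ 1 := pow_le_one₀ (abs_nonneg _) (abs_cos_le_one _)
      linarith [exp_pos (-(2 * (N : ℝ) ^ (2 * δ)))]
    · rw [zero_add]
      refine (abs_cos_pi_mul_pow_le _ n).trans (exp_le_exp.2 (neg_le_neg ?_))
      have hn' : (N : ℝ) ≤ n := by exact_mod_cast (Finset.mem_Ico.1 hn).1
      have e1 : (N : ℝ) ^ (2 * δ) = N * D ^ 2 := by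
        rw [hD, ← rpow_natCast, ← rpow_mul hN0.le, mul_comm (N : ℝ), ← rpow_add_one hN0.ne']
        congr 1
        push_cast
        ring
      have h2 : D ^ 2 ≤ y n ^ 2 := by
        rw [← sq_abs (y n)]
        push Not at hy
        gcongr
      rw [e1, mul_assoc]
      gcongr
  refine (Finset.sum_le_sum hterm).trans ?_
  rw [Finset.sum_add_distrib, ← Finset.sum_filter, Finset.sum_const, Finset.sum_const,
    Nat.card_Ico, nsmul_eq_mul, nsmul_eq_mul, mul_one, show 2 * N - N = N by omega]
  have h3 := mul_exp_neg_rpow_le (a := 2 * δ) (by positivity) hN1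
  have h4 : (1 : ℝ) ≤ (N : ℝ) ^ (1 / 2 + 2 * δ) := one_le_rpow hN1 (by positivity)
  have h5 : (0 : ℝ) ≤ 2 + (⌈1 / (2 * δ)⌉₊.factorial : ℝ) := by positivity
  have h6 := mul_le_mul_of_nonneg_left h4 h5
  rw [hDs] at hcard
  calc _ ≤ 2 / c * (N : ℝ) ^ (1 / 2 + 2 * δ) + 2 + (⌈1 / (2 * δ)⌉₊.factorial : ℝ) := by
        linarith
    _ ≤ _ := by linarith

theorem summable_abs_cos_pow_div_rpow {θ α : ℝ} (γ : ℝ) (hirr : Irrational θ)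
    (halg : IsAlgebraic ℚ θ) (hα : 1 / 2 < α) :
    Summable fun n : ℕ => |cos (π * (n * θ - γ))| ^ n / (n : ℝ) ^ α := by
  obtain ⟨δ, hδ, hαδ⟩ : ∃ δ : ℝ, 0 < δ ∧ α = 1 / 2 + 4 * δ :=
    ⟨(α - 1 / 2) / 4, by linarith, by ring⟩
  obtain ⟨c, hc, h⟩ := halg.exists_roth_bound hirr (show 2 < 2 + δ by linarith)
  rw [show 1 - (2 + δ) = -1 - δ by ring] at h
  refine summable_of_dyadic_le (fun n => by positivity)
    (K := 2 / c + 2 + (⌈1 / (2 * δ)⌉₊.factorial : ℝ)) (ρ := 2 ^ (-(2 * δ)))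
    (by positivity) (rpow_lt_one_of_one_lt_of_neg one_lt_two (by linarith)) fun k => ?_
  have hN := sum_abs_cos_pow_le (γ := γ) hδ hc h (N := 2 ^ k) (by positivity)
  have hpos : (0 : ℝ) < (2 ^ k : ℕ) := by positivity
  calc _ ≤ ∑ n ∈ Finset.Ico (2 ^ k) (2 ^ (k + 1)),
        |cos (π * ((n : ℕ) * θ - γ))| ^ n / ((2 ^ k : ℕ) : ℝ) ^ α := by
        refine Finset.sum_le_sum fun n hn => ?_
        have hn' : ((2 ^ k : ℕ) : ℝ) ≤ n := by exact_mod_cast (Finset.mem_Ico.1 hn).1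
        gcongr
    _ ≤ (2 / c + 2 + (⌈1 / (2 * δ)⌉₊.factorial : ℝ)) *
        ((2 ^ k : ℕ) : ℝ) ^ (1 / 2 + 2 * δ) / ((2 ^ k : ℕ) : ℝ) ^ α := by
        rw [← Finset.sum_div, pow_succ']
        gcongr
    _ = _ := by
        rw [mul_div_assoc, ← rpow_sub hpos, hαδ, Nat.cast_pow, Nat.cast_ofNat,
          ← rpow_natCast, ← rpow_natCast, ← rpow_mul two_pos.le, ← rpow_mul two_pos.le]
        congr 2
        ring

/-- If θ is an irrational algebraic number and α > 1/2, then both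
∑ sinⁿ(π n θ)/n^α and ∑ cosⁿ(π n θ)/n^α converge absolutely. -/
theorem stmt12 (θ α : ℝ) (hirr : Irrational θ) (halg : IsAlgebraic ℚ θ)
    (hα : 1 / 2 < α) :
    Summable (fun n : ℕ =>
      |Real.sin (Real.pi * ((n : ℝ) + 1) * θ) ^ (n + 1) / ((n : ℝ) + 1) ^ α|) ∧
    Summable (fun n : ℕ =>
      |Real.cos (Real.pi * ((n : ℝ) + 1) * θ) ^ (n + 1) / ((n : ℝ) + 1) ^ α|) := by
  have key : ∀ γ : ℝ, Summable fun n : ℕ =>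
      |cos (π * (((n : ℝ) + 1) * θ - γ)) ^ (n + 1) / ((n : ℝ) + 1) ^ α| := by
    intro γ
    refine ((summable_nat_add_iff 1).2 (summable_abs_cos_pow_div_rpow γ hirr halg hα)).congr
      fun n => ?_
    have : (0 : ℝ) ≤ ((n : ℝ) + 1) ^ α := by positivity
    rw [abs_div, abs_pow, abs_of_nonneg this]
    push_cast
    rfl
  constructor
  · refine (key (1 / 2)).congr fun n => ?_
    rw [mul_sub, ← mul_assoc, mul_one_div, cos_sub_pi_div_two]
  · refine (key 0).congr fun n => ?_
    rw [sub_zero, mul_assoc]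
end

section
/- There exists a set E of irrational real numbers, dense in ℝ, such that for every ξ ∈ E and every α ≤ 1, both series ∑_{n=1}^∞ sin^n(π n ξ)/n^α and ∑_{n=1}^∞ cos^n(π n ξ)/n^α diverge. -/
open Real Filter Finset

/-- If `|g|` is periodic, less than one at odd arguments and equal to one somewhere, then the
partial sums of `∑ g n ^ n / n` are not bounded above. -/
lemma exists_lt_sum_pow_div_of_periodic {g : ℕ → ℝ} {q n₀ : ℕ} (hq : q ≠ 0)
    (hper : Function.Periodic (fun n => |g n|) q) (hodd : ∀ n, Odd n → |g n| < 1)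
    (hn₀ : |g n₀| = 1) (C : ℝ) : ∃ N : ℕ, C < ∑ n ∈ Icc 1 N, g n ^ n / (n : ℝ) := by
  by_contra! hC
  obtain ⟨ρ, hρ0, hρ1, hρ⟩ : ∃ ρ : ℝ, 0 ≤ ρ ∧ ρ < 1 ∧ ∀ n, Odd n → |g n| ≤ ρ := by
    have hfin : ({n | Odd n}.image fun n => |g n|).Finite := by
      refine ((Finset.range q).image fun n => |g n|).finite_toSet.subset ?_
      rintro _ ⟨n, -, rfl⟩
      simp only [coe_image, coe_range, Set.mem_image, Set.mem_Iio]
      exact ⟨n % q, Nat.mod_lt _ (Nat.pos_of_ne_zero hq), hper.map_mod_nat n⟩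
    obtain ⟨_, ⟨m, hm, rfl⟩, hmax⟩ :=
      Set.exists_max_image _ id hfin ⟨_, Set.mem_image_of_mem _ (odd_one : Odd 1)⟩
    exact ⟨|g m|, abs_nonneg _, hodd m hm, fun n hn => hmax _ (Set.mem_image_of_mem _ hn)⟩
  have hterm : ∀ n : ℕ, {n : ℕ | (n : ZMod q) = (n₀ : ZMod q)}.indicator
      (fun n : ℕ => (1 / n : ℝ)) n ≤ g n ^ n / n + ρ ^ n := by
    intro n
    rcases Nat.even_or_odd n with hn | hn
    · refine le_add_of_le_of_nonneg ?_ (by positivity)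
      refine Set.indicator_apply_le' (fun h => ?_) fun _ => div_nonneg (hn.pow_nonneg _) (by simp)
      have h1 : |g n| = 1 := by
        rw [← hper.map_mod_nat n, (ZMod.natCast_eq_natCast_iff' _ _ _).1 h,
          hper.map_mod_nat n₀, hn₀]
      rw [← hn.pow_abs, h1, one_pow]
    · rw [Set.indicator_of_notMem]
      · have h1 : |g n ^ n / n| ≤ ρ ^ n := by
          rw [abs_div, abs_pow, Nat.abs_cast]
          exact (div_le_self (by positivity) (by exact_mod_cast hn.pos)).trans
            (pow_le_pow_left₀ (abs_nonneg _) (hρ n hn) n)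
        linarith [neg_abs_le (g n ^ n / n)]
      · intro h
        refine (hodd n hn).ne ?_
        rw [← hper.map_mod_nat n, (ZMod.natCast_eq_natCast_iff' _ _ _).1 h,
          hper.map_mod_nat n₀, hn₀]
  refine Real.not_summable_indicator_one_div_natCast hq (n₀ : ZMod q) ?_
  refine summable_of_sum_range_le (c := C + (1 - ρ)⁻¹)
    (fun n => Set.indicator_nonneg (fun _ _ => by positivity) _) fun N => ?_
  refine (sum_le_sum fun n _ => hterm n).trans ?_
  rw [sum_add_distrib]
  refine add_le_add ?_ ?_
  · refine le_trans (le_of_eq ?_) (hC (N - 1))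
    symm
    refine sum_subset (fun n hn => ?_) fun n hn hn' => ?_
    · simp only [mem_Icc, mem_range] at *
      omega
    · have : n = 0 := by
        simp only [mem_Icc, mem_range] at *
        omega
      simp [this]
  · rw [← tsum_geometric_of_lt_one hρ0 hρ1]
    exact (summable_geometric_of_lt_one hρ0 hρ1).sum_le_tsum _ fun _ _ => by positivity

/-- If `∑ a n / n ^ α` converges for some `α ≤ 1`, then the partial sums of `∑ a n / n` are
bounded above. -/
lemma exists_sum_div_le_of_tendsto {a : ℕ → ℝ} {α l : ℝ} (hα : α ≤ 1)
    (h : Tendsto (fun N : ℕ => ∑ n ∈ Icc 1 N, a n / (n : ℝ) ^ α) atTop (nhds l)) :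
    ∃ C : ℕ, ∀ N : ℕ, ∑ n ∈ Icc 1 N, a n / (n : ℝ) ≤ C := by
  have hreindex : ∀ (f : ℕ → ℝ) (N : ℕ), ∑ n ∈ Icc 1 N, f n = ∑ n ∈ range N, f (n + 1) := by
    intro f N
    induction N with
    | zero => simp
    | succ N ih => rw [sum_Icc_succ_top (by omega), ih, sum_range_succ]
  suffices h' : CauchySeq fun N : ℕ => ∑ n ∈ Icc 1 N, a n / (n : ℝ) by
    obtain ⟨l', hl'⟩ := cauchySeq_tendsto_of_complete h'
    obtain ⟨B, hB⟩ := hl'.bddAbove_range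
    obtain ⟨C, hC⟩ := exists_nat_ge B
    exact ⟨C, fun N => (hB ⟨N, rfl⟩).trans hC⟩
  rcases hα.eq_or_lt with rfl | hα
  · simpa using h.cauchySeq
  simp only [hreindex] at h ⊢
  obtain ⟨b, hb⟩ := h.norm.bddAbove_range
  have hanti : Antitone fun n : ℕ => ((n + 1 : ℕ) : ℝ) ^ (α - 1) := fun m n hmn =>
    rpow_le_rpow_of_nonpos (by positivity) (by exact_mod_cast Nat.succ_le_succ hmn) (by linarith)
  have hzero : Tendsto (fun n : ℕ => ((n + 1 : ℕ) : ℝ) ^ (α - 1)) atTop (nhds 0) := by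
    have := (tendsto_rpow_neg_atTop (sub_pos.2 hα)).comp
      (tendsto_natCast_atTop_atTop.comp (tendsto_add_atTop_nat 1))
    simpa [Function.comp_def] using this
  convert hanti.cauchySeq_series_mul_of_tendsto_zero_of_bounded hzero
    (fun N => hb ⟨N, rfl⟩) using 1
  refine funext fun N => sum_congr rfl fun n _ => ?_
  have hn : (0 : ℝ) < ((n + 1 : ℕ) : ℝ) := by positivity
  rw [rpow_sub_one hn.ne', smul_eq_mul]
  have := (rpow_pos_of_pos hn α).ne'
  field_simp

lemma dense_odd_div_four_mul :
    Dense {x : ℝ | ∃ (p : ℤ) (s : ℕ), Odd p ∧ s ≠ 0 ∧ x = p / (4 * s)} := by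
  refine Metric.dense_iff.2 fun x r hr => ?_
  obtain ⟨s, hs⟩ := exists_nat_one_div_lt hr
  refine ⟨((2 * ⌊2 * ((s + 1 : ℕ) : ℝ) * x⌋ + 1 : ℤ) : ℝ) / (4 * ((s + 1 : ℕ) : ℝ)), ?_,
    _, s + 1, odd_two_mul_add_one _, by omega, rfl⟩
  have h1 := Int.floor_le (2 * ((s + 1 : ℕ) : ℝ) * x)
  have h2 := Int.lt_floor_add_one (2 * ((s + 1 : ℕ) : ℝ) * x)
  set k := ⌊2 * ((s + 1 : ℕ) : ℝ) * x⌋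
  rw [← Nat.cast_succ, Nat.succ_eq_add_one] at hs
  set t : ℝ := ((s + 1 : ℕ) : ℝ) with ht
  have htpos : 0 < t := by positivity
  rw [div_lt_iff₀ htpos] at hs
  rw [Metric.mem_ball, Real.dist_eq, abs_lt, lt_sub_iff_add_lt, sub_lt_iff_lt_add,
    lt_div_iff₀ (by positivity), div_lt_iff₀ (by positivity)]
  push_cast
  constructor <;> nlinarith

section OddDivFourMul

variable {p : ℤ} {s : ℕ}

lemma abs_sin_lt_one_and_abs_cos_lt_one (hp : Odd p) (hs : s ≠ 0) {n : ℕ} (hn : Odd n) :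
    |sin (π * n * (p / (4 * s)))| < 1 ∧ |cos (π * n * (p / (4 * s)))| < 1 := by
  have hs' : (s : ℝ) ≠ 0 := by exact_mod_cast hs
  have h : sin (2 * (π * n * (p / (4 * s)))) ≠ 0 := by
    intro h
    obtain ⟨k, hk⟩ := sin_eq_zero_iff.1 h
    have h2 : (n * p : ℝ) = 2 * (k * s) := by
      field_simp at hk
      linarith
    have h3 : (n * p : ℤ) = 2 * (k * s) := by exact_mod_cast h2
    have h4 : Odd (n * p : ℤ) := ((Int.odd_coe_nat n).2 hn).mul hp
    rw [h3] at h4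
    exact (Int.not_odd_iff_even.2 (even_two_mul _)) h4
  rw [sin_two_mul] at h
  have hsin : sin (π * n * (p / (4 * s))) ≠ 0 := fun h0 => h (by simp [h0])
  have hcos : cos (π * n * (p / (4 * s))) ≠ 0 := fun h0 => h (by simp [h0])
  have := sin_sq_add_cos_sq (π * n * (p / (4 * s)))
  rw [← sq_lt_one_iff_abs_lt_one, ← sq_lt_one_iff_abs_lt_one]
  constructor
  · linarith [pow_pos (abs_pos.2 hcos) 2, sq_abs (cos (π * n * (p / (4 * s))))]
  · linarith [pow_pos (abs_pos.2 hsin) 2, sq_abs (sin (π * n * (p / (4 * s))))]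

lemma mul_add_four_mul_mul_div (hs : s ≠ 0) (n : ℕ) :
    π * ((n + 4 * s : ℕ) : ℝ) * (p / (4 * s)) = π * n * (p / (4 * s)) + p * π := by
  have hs' : (s : ℝ) ≠ 0 := by exact_mod_cast hs
  push_cast
  field_simp

lemma exists_lt_sum_sin_pow_div (hp : Odd p) (hs : s ≠ 0) (C : ℝ) :
    ∃ N : ℕ, C < ∑ n ∈ Icc 1 N, sin (π * n * (p / (4 * s))) ^ n / (n : ℝ) := by
  refine exists_lt_sum_pow_div_of_periodic (q := 4 * s) (n₀ := 2 * s) (by omega) (fun n => ?_)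
    (fun n hn => (abs_sin_lt_one_and_abs_cos_lt_one hp hs hn).1) ?_ C
  · simp only [mul_add_four_mul_mul_div hs, sin_add_int_mul_pi]
    simp [abs_mul]
  · have hs' : (s : ℝ) ≠ 0 := by exact_mod_cast hs
    obtain ⟨k, rfl⟩ := hp
    have : π * ((2 * s : ℕ) : ℝ) * (((2 * k + 1 : ℤ) : ℝ) / (4 * s)) = π / 2 + k * π := by
      push_cast
      field_simp
      ring
    rw [this, sin_add_int_mul_pi]
    simp

lemma exists_lt_sum_cos_pow_div (hp : Odd p) (hs : s ≠ 0) (C : ℝ) :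
    ∃ N : ℕ, C < ∑ n ∈ Icc 1 N, cos (π * n * (p / (4 * s))) ^ n / (n : ℝ) := by
  refine exists_lt_sum_pow_div_of_periodic (q := 4 * s) (n₀ := 0) (by omega) (fun n => ?_)
    (fun n hn => (abs_sin_lt_one_and_abs_cos_lt_one hp hs hn).2) (by simp) C
  simp only [mul_add_four_mul_mul_div hs, cos_add_int_mul_pi]
  simp [abs_mul]

end OddDivFourMul

/-- If continuous functions are unbounded above on a dense set of points, then they are unbounded
above at generic points. -/
lemma eventually_residual_forall_exists_lt {X : Type*} [TopologicalSpace X] {S : ℕ → X → ℝ}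
    {D : Set X} (hS : ∀ N, Continuous (S N)) (hD : Dense D)
    (h : ∀ x ∈ D, ∀ C : ℝ, ∃ N, C < S N x) :
    ∀ᶠ x in residual X, ∀ C : ℕ, ∃ N, (C : ℝ) < S N x := by
  refine eventually_countable_forall.2 fun C => residual_of_dense_open ?_ ?_
  · simp only [Set.ofPred_exists]
    exact isOpen_iUnion fun N => isOpen_lt continuous_const (hS N)
  · exact hD.mono fun x hx => h x hx C

/-- There is a dense set E of irrational numbers such that for every ξ ∈ E and
every α ≤ 1 both series ∑ sinⁿ(π n ξ)/n^α and ∑ cosⁿ(π n ξ)/n^α diverge. -/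
theorem stmt19 :
    ∃ E : Set ℝ, Dense E ∧ (∀ ξ ∈ E, Irrational ξ) ∧
      ∀ ξ ∈ E, ∀ α : ℝ, α ≤ 1 →
        (¬ ∃ l : ℝ, Tendsto (fun N : ℕ => ∑ n ∈ Finset.Icc 1 N,
            Real.sin (Real.pi * n * ξ) ^ n / (n : ℝ) ^ α) atTop (nhds l)) ∧
        (¬ ∃ l : ℝ, Tendsto (fun N : ℕ => ∑ n ∈ Finset.Icc 1 N,
            Real.cos (Real.pi * n * ξ) ^ n / (n : ℝ) ^ α) atTop (nhds l)) := by
  have hsin := eventually_residual_forall_exists_lt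
    (S := fun N ξ => ∑ n ∈ Icc 1 N, sin (π * n * ξ) ^ n / (n : ℝ))
    (fun N => by fun_prop) dense_odd_div_four_mul <| by
      rintro _ ⟨p, s, hp, hs, rfl⟩ C
      exact exists_lt_sum_sin_pow_div hp hs C
  have hcos := eventually_residual_forall_exists_lt
    (S := fun N ξ => ∑ n ∈ Icc 1 N, cos (π * n * ξ) ^ n / (n : ℝ))
    (fun N => by fun_prop) dense_odd_div_four_mul <| by
      rintro _ ⟨p, s, hp, hs, rfl⟩ C
      exact exists_lt_sum_cos_pow_div hp hs C
  refine ⟨_, dense_of_mem_residual (eventually_residual_irrational.and (hsin.and hcos)),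
    fun ξ hξ => hξ.1, fun ξ hξ α hα => ⟨?_, ?_⟩⟩
  · rintro ⟨l, hl⟩
    obtain ⟨C, hC⟩ := exists_sum_div_le_of_tendsto hα hl
    obtain ⟨N, hN⟩ := hξ.2.1 C
    exact (hC N).not_gt hN
  · rintro ⟨l, hl⟩
    obtain ⟨C, hC⟩ := exists_sum_div_le_of_tendsto hα hl
    obtain ⟨N, hN⟩ := hξ.2.2 C
    exact (hC N).not_gt hN
end
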